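/- Let d ≥ 1, let f ∈ C^∞(ℝ^d) satisfy ‖(1+|x|²)^{n/2} ∂^β f‖_{L²(ℝ^d)} ≤ D₁ D₂^{n+|β|} (n!)^ν (|β|!)^μ for all n ∈ ℕ₀ and all multi-indices β ∈ ℕ₀^d, with constants D₁ > 0, D₂ ≥ 1, ν ≥ 0 and 0 ≤ μ < 1. Let δ ∈ [0,1] be such that s := δν + μ < 1, and let ρ : ℝ^d → (0,∞) be a measurable function with ρ(x) ≤ R(1+|x|²)^{δ/2} for all x ∈ ℝ^d (where R ≥ 1) and ρ(x) ≤ η|x| for all |x| ≥ r₀ (where η ∈ (0,1) and r₀ ≥ 1). Then there is a constant K ≥ 1, depending only on γ, R, r₀, η, ν, s and d, such that for every measurable set ω ⊂ ℝ^d satisfying |B(x,ρ(x)) ∩ ω| / |B(x,ρ(x))| ≥ γ for all x ∈ ℝ^d (with some γ ∈ (0,1)) and for every ε ∈ (0,1], one has ‖f‖²_{L²(ℝ^d)} ≤ exp(K·(1 + log(1/ε) + D₂^{4/(1−s)})) · ‖f‖²_{L²(ω)} + ε D₁². -/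

import Mathlib

open MeasureTheory

/-- The partial derivative in the `i`-th coordinate direction. -/
noncomputable def pderivE {d : ℕ} (i : Fin d) (f : EuclideanSpace ℝ (Fin d) → ℝ) :
    EuclideanSpace ℝ (Fin d) → ℝ :=
  fun x => fderiv ℝ f x (EuclideanSpace.single i 1)

/-- The multi-index partial derivative `∂^β f` for `β ∈ ℕ₀^d`. -/
noncomputable def mderiv {d : ℕ} (β : Fin d → ℕ) (f : EuclideanSpace ℝ (Fin d) → ℝ) :
    EuclideanSpace ℝ (Fin d) → ℝ :=
  (List.finRange d).foldr (fun i g => (pderivE i)^[β i] g) f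

/-!
Fix `x` and put `B = B(x, ρ(x))`. By thickness of `ω`, a fixed proportion of the segments from a
point `y ∈ B` to the points of `B` spend a fixed proportion of their length in `ω`. On such a
segment, replace `f` by its Taylor polynomial of degree `n` at `y`: Remez's inequality bounds the
value at `y` by the values in `ω` with a constant exponential in `n`, and the remainder is
controlled by the derivatives of order `n + 1`. Averaging over the segments gives a local estimate
on `B`, with remainder of size `ρ(x) ^ (n + 1) / n!` times the `L²` norm of these derivatives
on `B`.

The growth bounds on `ρ` turn `ρ(x) ^ (n + 1)` into the weight `(1 + |y|²) ^ (δ (n + 1) / 2)`, up to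
an exponential constant, for all `y ∈ B`. A Besicovitch covering then sums the local estimates, and
the hypothesis on `f` makes the global remainder decay like `n ^ (-(1 - s) n)`, up to a factor
exponential in `n`. It is at most `ε D₁²` for `n` of order `D₂ ^ (2 / (1 - s)) + log (1 / ε)`, and
the exponential factor in `n` becomes the constant of the theorem.
-/

section Remez

lemma exists_separated_points {h : ℝ} (hh : 0 ≤ h) (n : ℕ) {S : Set ℝ} (hS : BddBelow S)
    (hvol : ENNReal.ofReal (n * h) < volume S) :
    ∃ t : ℕ → ℝ, (∀ i ≤ n, t i ∈ S) ∧ ∀ i < n, t i + h ≤ t (i + 1) := by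
  have hne : S.Nonempty := nonempty_of_measure_ne_zero hvol.ne_bot
  induction n generalizing S with
  | zero =>
    obtain ⟨x, hx⟩ := hne
    exact ⟨fun _ => x, fun _ _ => hx, by simp⟩
  | succ n ih =>
    obtain ⟨v, -, hnv, hvS⟩ := ENNReal.lt_iff_exists_real_btwn.1 hvol
    replace hnv : (n + 1) * h < v := by
      simpa using (ENNReal.ofReal_lt_ofReal_iff_of_nonneg (by positivity)).1 hnv
    obtain ⟨x, hx, hxlt⟩ : ∃ x ∈ S, x < sInf S + (v - (n + 1) * h) :=
      exists_lt_of_csInf_lt hne (by linarith)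
    have hinf : sInf S ≤ x := csInf_le hS hx
    have hcover : S ⊆ Set.Ico (sInf S) (x + h) ∪ S ∩ Set.Ici (x + h) := fun y hy =>
      (lt_or_ge y (x + h)).imp (fun hlt => ⟨csInf_le hS hy, hlt⟩) fun hge => ⟨hy, hge⟩
    have htail : ENNReal.ofReal (n * h) < volume (S ∩ Set.Ici (x + h)) := by
      by_contra! hle
      refine hvS.not_ge ?_
      calc volume S
          ≤ volume (Set.Ico (sInf S) (x + h)) + volume (S ∩ Set.Ici (x + h)) :=
            (measure_mono hcover).trans (measure_union_le _ _)
        _ ≤ ENNReal.ofReal (x + h - sInf S) + ENNReal.ofReal (n * h) := by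
            rw [Real.volume_Ico]
            gcongr
        _ = ENNReal.ofReal (x + h - sInf S + n * h) :=
            (ENNReal.ofReal_add (by linarith) (by positivity)).symm
        _ ≤ ENNReal.ofReal v := ENNReal.ofReal_le_ofReal (by linarith)
    obtain ⟨t, ht_mem, ht_step⟩ := ih (hS.mono Set.inter_subset_left) htail
      (nonempty_of_measure_ne_zero htail.ne_bot)
    refine ⟨fun i => Nat.casesOn i x t, fun i hi => ?_, fun i hi => ?_⟩
    · cases i with
      | zero => exact hx
      | succ i => exact (ht_mem i (by omega)).1
    · cases i with
      | zero => exact (ht_mem 0 (by omega)).2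
      | succ i => exact ht_step i (by omega)

lemma abs_sub_mul_le_of_forall_step {n : ℕ} {h : ℝ} {t : ℕ → ℝ}
    (ht : ∀ i < n, t i + h ≤ t (i + 1)) {i j : ℕ} (hi : i ≤ n) (hj : j ≤ n) :
    |(i : ℝ) - j| * h ≤ |t i - t j| := by
  wlog hij : i ≤ j generalizing i j
  · rw [abs_sub_comm, abs_sub_comm (t i)]
    exact this hj hi (by omega)
  have hsub : ((j : ℝ) - i) * h ≤ t j - t i := by
    induction j, hij using Nat.le_induction with
    | base => simp
    | succ j _ ih =>
      push_cast
      linarith [ih (by omega), ht j (by omega)]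
  rw [abs_sub_comm, abs_sub_comm (t i), abs_of_nonneg (by simpa using hij)]
  exact hsub.trans (le_abs_self _)

lemma prod_erase_abs_sub {n j : ℕ} (hj : j ≤ n) :
    ∏ k ∈ (Finset.range (n + 1)).erase j, |(j : ℝ) - k| = j.factorial * (n - j).factorial := by
  have hsplit : (Finset.range (n + 1)).erase j =
      Finset.range j ∪ Finset.Ico (j + 1) (n + 1) := by
    ext k
    simp only [Finset.mem_erase, Finset.mem_range, Finset.mem_union, Finset.mem_Ico]
    omega
  have hdisj : Disjoint (Finset.range j) (Finset.Ico (j + 1) (n + 1)) := by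
    rw [Finset.disjoint_left]
    intro k
    simp only [Finset.mem_range, Finset.mem_Ico]
    omega
  have hbelow : ∏ k ∈ Finset.range j, |(j : ℝ) - k| = j.factorial := by
    rw [← Finset.prod_range_add_one_eq_factorial, ← Finset.prod_range_reflect, Nat.cast_prod]
    refine Finset.prod_congr rfl fun k hk => ?_
    have hkj : k + 1 ≤ j := Finset.mem_range.1 hk
    have hcast : (j : ℝ) - (j - 1 - k : ℕ) = (k + 1 : ℕ) := by
      rw [Nat.sub_sub, Nat.add_comm 1, Nat.cast_sub hkj, sub_sub_cancel]
    rw [hcast, Nat.abs_cast]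
  have habove : ∏ k ∈ Finset.Ico (j + 1) (n + 1), |(j : ℝ) - k| = (n - j).factorial := by
    rw [Finset.prod_Ico_eq_prod_range, Nat.add_sub_add_right,
      ← Finset.prod_range_add_one_eq_factorial, Nat.cast_prod]
    refine Finset.prod_congr rfl fun k _ => ?_
    rw [abs_sub_comm, abs_of_nonneg (by push_cast; linarith [(k.cast_nonneg : (0 : ℝ) ≤ k)])]
    push_cast
    ring
  rw [hsplit, Finset.prod_union hdisj, hbelow, habove]

lemma abs_eval_lagrange_basis_le {n j : ℕ} {h x : ℝ} {t : ℕ → ℝ} (hh : 0 < h)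
    (ht : ∀ i < n, t i + h ≤ t (i + 1)) (hx : ∀ i ≤ n, |x - t i| ≤ 1) (hj : j ≤ n) :
    |(Lagrange.basis (Finset.range (n + 1)) t j).eval x| ≤
      (1 / h) ^ n * (1 / (j.factorial * (n - j).factorial)) := by
  have hcard : ((Finset.range (n + 1)).erase j).card = n := by
    rw [Finset.card_erase_of_mem (by simpa [Nat.lt_succ_iff] using hj), Finset.card_range,
      Nat.add_sub_cancel]
  have hpow : (1 / h) ^ n = ∏ _k ∈ (Finset.range (n + 1)).erase j, (1 / h) := by
    rw [Finset.prod_const, hcard]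
  rw [Lagrange.basis, Polynomial.eval_prod, Finset.abs_prod, ← prod_erase_abs_sub hj,
    one_div (∏ _ ∈ _, _), ← Finset.prod_inv_distrib, hpow, ← Finset.prod_mul_distrib]
  refine Finset.prod_le_prod (fun _ _ => abs_nonneg _) fun k hk => ?_
  obtain ⟨hkj, hk⟩ := Finset.mem_erase.1 hk
  have hkn : k ≤ n := by simpa [Nat.lt_succ_iff] using hk
  have hjk : 0 < |(j : ℝ) - k| := abs_pos.2 (sub_ne_zero.2 (by exact_mod_cast hkj.symm))
  calc |(Lagrange.basisDivisor (t j) (t k)).eval x| = |t j - t k|⁻¹ * |x - t k| := by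
        simp [Lagrange.basisDivisor, abs_mul, abs_inv]
    _ ≤ (|(j : ℝ) - k| * h)⁻¹ * 1 := by
        gcongr
        exacts [abs_sub_mul_le_of_forall_step ht hj hkn, hx k hkn]
    _ = 1 / h * |(j : ℝ) - k|⁻¹ := by rw [mul_inv]; ring

lemma abs_eval_le_of_separated {n : ℕ} {h x M : ℝ} {t : ℕ → ℝ} {P : Polynomial ℝ}
    (hP : P.degree < (n + 1 : ℕ)) (hh : 0 < h) (ht : ∀ i < n, t i + h ≤ t (i + 1))
    (hx : ∀ i ≤ n, |x - t i| ≤ 1) (hM : ∀ i ≤ n, |P.eval (t i)| ≤ M) :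
    |P.eval x| ≤ M * ((2 / h) ^ n / n.factorial) := by
  have hinj : Set.InjOn t (Finset.range (n + 1)) := by
    intro i hi j hj hij
    simp only [Finset.coe_range, Set.mem_Iio, Nat.lt_succ_iff] at hi hj
    have hsep := abs_sub_mul_le_of_forall_step ht hi hj
    rw [hij, sub_self, abs_zero] at hsep
    have habs : |(i : ℝ) - j| = 0 :=
      le_antisymm (nonpos_of_mul_nonpos_left hsep hh) (abs_nonneg _)
    exact_mod_cast sub_eq_zero.1 (abs_eq_zero.1 habs)
  have hinterp : P.eval x = ∑ j ∈ Finset.range (n + 1), P.eval (t j) *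
      (Lagrange.basis (Finset.range (n + 1)) t j).eval x := by
    conv_lhs => rw [Lagrange.eq_interpolate (f := P) hinj (by simpa using hP)]
    simp [Lagrange.interpolate_apply, Polynomial.eval_finsetSum]
  have hle : ∀ j ∈ Finset.range (n + 1), j ≤ n := fun j hj =>
    Nat.lt_succ_iff.1 (Finset.mem_range.1 hj)
  calc |P.eval x|
      ≤ ∑ j ∈ Finset.range (n + 1),
          M * ((1 / h) ^ n * (1 / (j.factorial * (n - j).factorial))) := by
        rw [hinterp]
        refine (Finset.abs_sum_le_sum_abs _ _).trans (Finset.sum_le_sum fun j hj => ?_)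
        rw [abs_mul]
        exact mul_le_mul (hM j (hle j hj)) (abs_eval_lagrange_basis_le hh ht hx (hle j hj))
          (abs_nonneg _) ((abs_nonneg _).trans (hM 0 n.zero_le))
    _ = M * ((1 / h) ^ n / n.factorial * ∑ j ∈ Finset.range (n + 1), (n.choose j : ℝ)) := by
        rw [Finset.mul_sum, Finset.mul_sum]
        refine Finset.sum_congr rfl fun j hj => ?_
        rw [Nat.cast_choose ℝ (hle j hj)]
        field_simp
    _ = M * ((2 / h) ^ n / n.factorial) := by
        rw [← Nat.cast_sum, Nat.sum_range_choose]
        push_cast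
        ring

lemma two_div_pow_div_factorial_le {κ : ℝ} (hκ0 : 0 < κ) (hκ1 : κ ≤ 1) (n : ℕ) :
    (2 / (κ / (n + 1))) ^ n / n.factorial ≤ (6 / κ) ^ (n + 1) := by
  have hexp : ((n + 1 : ℕ) : ℝ) ^ (n + 1) / (n + 1).factorial ≤ 3 ^ (n + 1) := calc
    _ ≤ Real.exp (n + 1 : ℕ) := Real.pow_div_factorial_le_exp _ (by positivity) (n + 1)
    _ = Real.exp 1 ^ (n + 1) := (Real.exp_one_pow _).symm
    _ ≤ 3 ^ (n + 1) := by gcongr; linarith [Real.exp_one_lt_d9]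
  have h2κ : 1 ≤ 2 / κ := (one_le_div hκ0).2 (by linarith)
  calc (2 / (κ / (n + 1))) ^ n / n.factorial
      = (2 / κ) ^ n * (((n + 1 : ℕ) : ℝ) ^ (n + 1) / (n + 1).factorial) := by
        rw [← div_mul, mul_pow, Nat.factorial_succ]
        push_cast
        field_simp
        rw [pow_succ']
    _ ≤ (2 / κ) ^ (n + 1) * 3 ^ (n + 1) := by
        gcongr
        exact n.le_succ
    _ = (6 / κ) ^ (n + 1) := by rw [← mul_pow]; ring

/-- Remez's inequality, with a non-optimal constant: interpolate at `n + 1` points of `S` whose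
consecutive distances are at least `κ / (n + 1)`. -/
lemma remez_inequality {n : ℕ} {κ x M : ℝ} {S : Set ℝ} {P : Polynomial ℝ}
    (hP : P.degree < (n + 1 : ℕ)) (hκ : 0 < κ) (hS : S ⊆ Set.Icc 0 1)
    (hκS : ENNReal.ofReal κ ≤ volume S) (hx : x ∈ Set.Icc (0 : ℝ) 1)
    (hM : ∀ t ∈ S, |P.eval t| ≤ M) :
    |P.eval x| ≤ M * (6 / κ) ^ (n + 1) := by
  have hκ1 : κ ≤ 1 := by
    simpa using hκS.trans (measure_mono hS)
  have hvol : ENNReal.ofReal (n * (κ / (n + 1))) < volume S := by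
    refine lt_of_lt_of_le ((ENNReal.ofReal_lt_ofReal_iff hκ).2 ?_) hκS
    rw [← mul_div_assoc, div_lt_iff₀ (by positivity)]
    linarith
  obtain ⟨t, htS, ht⟩ :=
    exists_separated_points (by positivity) n (bddBelow_Icc.mono hS) hvol
  have hM0 : 0 ≤ M := (abs_nonneg _).trans (hM _ (htS 0 n.zero_le))
  have hxt : ∀ i ≤ n, |x - t i| ≤ 1 := fun i hi => by
    simpa [Real.dist_eq] using Real.dist_le_of_mem_Icc_01 hx (hS (htS i hi))
  exact (abs_eval_le_of_separated hP (by positivity) ht hxt fun i hi => hM _ (htS i hi)).trans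
    (mul_le_mul_of_nonneg_left (two_div_pow_div_factorial_le hκ hκ1 n) hM0)

lemma enorm_eval_sq_le_of_forall_mem {n : ℕ} {κ x : ℝ} {A : ENNReal} {S : Set ℝ}
    {P : Polynomial ℝ} (hP : P.degree < (n + 1 : ℕ)) (hκ : 0 < κ) (hS : S ⊆ Set.Icc 0 1)
    (hκS : ENNReal.ofReal κ ≤ volume S) (hx : x ∈ Set.Icc (0 : ℝ) 1)
    (hA : ∀ t ∈ S, ‖P.eval t‖ₑ ^ 2 ≤ A) :
    ‖P.eval x‖ₑ ^ 2 ≤ ENNReal.ofReal ((36 / κ ^ 2) ^ (n + 1)) * A := by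
  have henorm (t : ℝ) : ‖P.eval t‖ₑ ^ 2 = ENNReal.ofReal (P.eval t ^ 2) := by
    rw [Real.enorm_eq_ofReal_abs, ← ENNReal.ofReal_pow (abs_nonneg _), sq_abs]
  rcases eq_or_ne A ⊤ with rfl | hAtop
  · rw [ENNReal.mul_top (by simpa using by positivity)]
    exact le_top
  lift A to NNReal using hAtop
  have hM : ∀ t ∈ S, |P.eval t| ≤ √A := fun t ht =>
    Real.abs_le_sqrt <| (ENNReal.ofReal_le_ofReal_iff A.2).1 <| by
      simpa [henorm] using hA t ht
  have hremez := pow_le_pow_left₀ (abs_nonneg _) (remez_inequality hP hκ hS hκS hx hM) 2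
  rw [henorm, ← ENNReal.ofReal_coe_nnreal, ← ENNReal.ofReal_mul (by positivity)]
  refine ENNReal.ofReal_le_ofReal ?_
  calc P.eval x ^ 2 ≤ (√A * (6 / κ) ^ (n + 1)) ^ 2 := by rwa [sq_abs] at hremez
    _ = (36 / κ ^ 2) ^ (n + 1) * A := by
      rw [mul_pow, Real.sq_sqrt A.coe_nonneg, pow_right_comm, div_pow, mul_comm]
      norm_num

end Remez

section IntervalEstimate

lemma eLpNorm_two_sq {α F : Type*} [MeasurableSpace α] [NormedAddCommGroup F] (μ : Measure α)
    (f : α → F) : eLpNorm f 2 μ ^ 2 = ∫⁻ x, ‖f x‖ₑ ^ 2 ∂μ := by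
  simpa using eLpNorm_nnreal_pow_eq_lintegral (μ := μ) (f := f) (p := 2) two_ne_zero

lemma half_le_measure_le_lintegral {α : Type*} [MeasurableSpace α] {μ : Measure α}
    {g : α → ENNReal} (hg : Measurable g) {S : Set α} {κ : ENNReal} (hκ0 : κ ≠ 0) (hκ : κ ≠ ⊤)
    (hκS : κ ≤ μ S) : κ / 2 ≤ μ {x ∈ S | g x ≤ 2 / κ * ∫⁻ y in S, g y ∂μ} := by
  set c := 2 / κ * ∫⁻ y in S, g y ∂μ with hc
  have hgc : MeasurableSet {x | g x ≤ c} := measurableSet_le hg measurable_const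
  have hexceptional : μ (S \ {x | g x ≤ c}) ≤ κ / 2 := by
    have hcompl : μ (S \ {x | g x ≤ c}) = μ.restrict S {x | c < g x} := by
      rw [Measure.restrict_apply (measurableSet_lt measurable_const hg), Set.inter_comm]
      simp [Set.sdiff_eq, Set.compl_ofPred]
    rw [hcompl]
    rcases eq_or_ne c 0 with hc0 | hc0
    · have hzero : g =ᵐ[μ.restrict S] 0 := (lintegral_eq_zero_iff hg).1 <|
        (mul_eq_zero.1 (hc ▸ hc0)).resolve_left (ENNReal.div_ne_zero.2 ⟨two_ne_zero, hκ⟩)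
      have hnull : μ.restrict S {x | c < g x} = 0 := by
        rw [hc0]
        simpa [pos_iff_ne_zero] using ae_iff.1 hzero
      exact hnull.trans_le zero_le
    rcases eq_or_ne c ⊤ with hctop | hctop
    · simp [hctop]
    calc μ.restrict S {x | c < g x} ≤ μ.restrict S {x | c ≤ g x} :=
          measure_mono (Set.ofPred_subset_ofPred.2 fun _ => le_of_lt)
      _ ≤ (∫⁻ y in S, g y ∂μ) / c := meas_ge_le_lintegral_div hg.aemeasurable hc0 hctop
      _ ≤ κ / 2 := by
        refine ENNReal.div_le_of_le_mul ?_
        rw [hc, ← mul_assoc, ← ENNReal.inv_div (.inl ENNReal.ofNat_ne_top) (.inl two_ne_zero),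
          ENNReal.mul_inv_cancel (ENNReal.half_pos hκ0).ne' (ENNReal.div_ne_top hκ two_ne_zero),
          one_mul]
  refine ENNReal.le_of_add_le_add_right (ENNReal.div_ne_top hκ two_ne_zero) (a := κ / 2) ?_
  calc κ / 2 + κ / 2 ≤ μ S := (ENNReal.add_halves κ).trans_le hκS
    _ = μ (S ∩ {x | g x ≤ c}) + μ (S \ {x | g x ≤ c}) := (measure_inter_add_sdiff S hgc).symm
    _ ≤ μ {x ∈ S | g x ≤ c} + κ / 2 := add_le_add le_rfl hexceptional

lemma exists_polynomial_sub_eval_eq_integral {n : ℕ} {φ : ℝ → ℝ}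
    (hφ : ContDiff ℝ (n + 1 : ℕ) φ) :
    ∃ P : Polynomial ℝ, P.degree < (n + 1 : ℕ) ∧ ∀ t, φ t - P.eval t =
      ∫ τ in (0 : ℝ)..t, ((t - τ) ^ n / n.factorial) * iteratedDeriv (n + 1) φ τ := by
  refine ⟨∑ k ∈ Finset.range (n + 1),
    Polynomial.C ((k.factorial : ℝ)⁻¹ * iteratedDeriv k φ 0) * Polynomial.X ^ k, ?_, fun t => ?_⟩
  · rw [← Fin.sum_univ_eq_sum_range (fun k =>
      Polynomial.C ((k.factorial : ℝ)⁻¹ * iteratedDeriv k φ 0) * Polynomial.X ^ k)]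
    exact Polynomial.degree_sum_fin_lt _
  rcases eq_or_ne t 0 with rfl | ht
  · simp [Polynomial.eval_finsetSum, Finset.sum_range_succ']
  have hwithin {k : ℕ} (hk : k ≤ n + 1) {τ : ℝ} (hτ : τ ∈ Set.uIcc 0 t) :
      iteratedDerivWithin k φ (Set.uIcc 0 t) τ = iteratedDeriv k φ τ :=
    iteratedDerivWithin_eq_iteratedDeriv (uniqueDiffOn_uIcc ht.symm)
      (hφ.contDiffAt.of_le (by exact_mod_cast hk)) hτ
  have htaylor : (∑ k ∈ Finset.range (n + 1), Polynomial.C ((k.factorial : ℝ)⁻¹ *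
      iteratedDeriv k φ 0) * Polynomial.X ^ k).eval t =
      taylorWithinEval φ n (Set.uIcc 0 t) 0 t := by
    rw [taylor_within_apply, Polynomial.eval_finsetSum]
    refine Finset.sum_congr rfl fun k hk => ?_
    rw [hwithin (Finset.mem_range.1 hk).le Set.left_mem_uIcc]
    simp only [Polynomial.eval_mul, Polynomial.eval_C, Polynomial.eval_pow, Polynomial.eval_X,
      sub_zero, smul_eq_mul]
    ring
  rw [htaylor, taylor_integral_remainder hφ.contDiffOn]
  refine intervalIntegral.integral_congr fun τ hτ => ?_
  simp only [smul_eq_mul, hwithin le_rfl hτ]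

lemma exists_polynomial_enorm_sub_sq_le {n : ℕ} {φ : ℝ → ℝ} (hφ : ContDiff ℝ (n + 1 : ℕ) φ) :
    ∃ P : Polynomial ℝ, P.degree < (n + 1 : ℕ) ∧ P.eval 0 = φ 0 ∧ ∀ t ∈ Set.Icc (0 : ℝ) 1,
      ‖φ t - P.eval t‖ₑ ^ 2 ≤ ENNReal.ofReal (1 / n.factorial ^ 2) *
        ∫⁻ τ in Set.Icc (0 : ℝ) 1, ‖iteratedDeriv (n + 1) φ τ‖ₑ ^ 2 := by
  obtain ⟨P, hP, hrem⟩ := exists_polynomial_sub_eval_eq_integral hφ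
  refine ⟨P, hP, (sub_eq_zero.1 (by simpa using hrem 0)).symm, fun t ht => ?_⟩
  set g := iteratedDeriv (n + 1) φ
  set μ := volume.restrict (Set.Icc (0 : ℝ) 1)
  have : IsProbabilityMeasure μ := ⟨by simp [μ]⟩
  have hg : AEStronglyMeasurable g μ := (hφ.continuous_iteratedDeriv' _).aestronglyMeasurable
  have hkernel : ∀ τ ∈ Set.Ioc 0 t, ‖(t - τ) ^ n / n.factorial * g τ‖ₑ ≤
      ENNReal.ofReal (1 / n.factorial) * ‖g τ‖ₑ := fun τ hτ => by
    rw [enorm_mul, Real.enorm_of_nonneg (by have := sub_nonneg.2 hτ.2; positivity)]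
    gcongr
    exact pow_le_one₀ (sub_nonneg.2 hτ.2) (by linarith [hτ.1, ht.2])
  have hL1 : ‖φ t - P.eval t‖ₑ ≤ ENNReal.ofReal (1 / n.factorial) * eLpNorm g 2 μ := calc
    _ ≤ ∫⁻ τ in Set.Ioc 0 t, ‖(t - τ) ^ n / n.factorial * g τ‖ₑ := by
      rw [hrem, intervalIntegral.integral_of_le ht.1]
      exact enorm_integral_le_lintegral_enorm _
    _ ≤ ∫⁻ τ in Set.Ioc 0 t, ENNReal.ofReal (1 / n.factorial) * ‖g τ‖ₑ :=
      setLIntegral_mono' measurableSet_Ioc hkernel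
    _ ≤ ENNReal.ofReal (1 / n.factorial) * ∫⁻ τ in Set.Icc 0 1, ‖g τ‖ₑ := by
      rw [lintegral_const_mul' _ _ ENNReal.ofReal_ne_top]
      gcongr
      exact fun τ hτ => ⟨hτ.1.le, hτ.2.trans ht.2⟩
    _ ≤ ENNReal.ofReal (1 / n.factorial) * eLpNorm g 2 μ := by
      rw [← eLpNorm_one_eq_lintegral_enorm]
      gcongr
      exact eLpNorm_le_eLpNorm_of_exponent_le one_le_two hg
  calc ‖φ t - P.eval t‖ₑ ^ 2 ≤ (ENNReal.ofReal (1 / n.factorial) * eLpNorm g 2 μ) ^ 2 := by gcongr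
    _ = ENNReal.ofReal (1 / n.factorial ^ 2) * ∫⁻ τ in Set.Icc (0 : ℝ) 1, ‖g τ‖ₑ ^ 2 := by
      rw [mul_pow, eLpNorm_two_sq, ← ENNReal.ofReal_pow (by positivity), one_div_pow]

lemma enorm_sq_le_two_mul_add {F : Type*} [SeminormedAddCommGroup F] (a b : F) :
    ‖b‖ₑ ^ 2 ≤ 2 * (‖a‖ₑ ^ 2 + ‖a - b‖ₑ ^ 2) := calc
  ‖b‖ₑ ^ 2 ≤ (‖a‖ₑ + ‖a - b‖ₑ) ^ 2 := by
    gcongr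
    simpa using enorm_sub_le (a := a) (b := a - b)
  _ ≤ 2 * (‖a‖ₑ ^ 2 + ‖a - b‖ₑ ^ 2) := by
    have h := ENNReal.rpow_add_le_mul_rpow_add_rpow ‖a‖ₑ ‖a - b‖ₑ one_le_two
    rw [show (2 : ℝ) - 1 = 1 by norm_num, ENNReal.rpow_one] at h
    exact_mod_cast h

lemma enorm_zero_sq_le_lintegral_add_lintegral {n : ℕ} {κ : ℝ} {φ : ℝ → ℝ}
    (hφ : ContDiff ℝ (n + 1 : ℕ) φ) (hκ : 0 < κ) {S : Set ℝ} (hS : S ⊆ Set.Icc 0 1)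
    (hκS : ENNReal.ofReal κ ≤ volume S) :
    ‖φ 0‖ₑ ^ 2 ≤ ENNReal.ofReal (4 / κ * (144 / κ ^ 2) ^ (n + 1)) *
      ((∫⁻ t in S, ‖φ t‖ₑ ^ 2) + ENNReal.ofReal (1 / n.factorial ^ 2) *
        ∫⁻ t in Set.Icc (0 : ℝ) 1, ‖iteratedDeriv (n + 1) φ t‖ₑ ^ 2) := by
  obtain ⟨P, hP, hP0, hφP⟩ := exists_polynomial_enorm_sub_sq_le hφ
  set J := ENNReal.ofReal (1 / n.factorial ^ 2) *
    ∫⁻ t in Set.Icc (0 : ℝ) 1, ‖iteratedDeriv (n + 1) φ t‖ₑ ^ 2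
  set I := ∫⁻ t in S, ‖φ t‖ₑ ^ 2
  have hκ1 : κ ≤ 1 := by simpa using hκS.trans (measure_mono hS)
  have hgood : ENNReal.ofReal (κ / 2) ≤
      volume {t ∈ S | ‖φ t‖ₑ ^ 2 ≤ ENNReal.ofReal (2 / κ) * I} := by
    have h := half_le_measure_le_lintegral (μ := volume) (g := fun t => ‖φ t‖ₑ ^ 2)
      (by have := hφ.continuous; fun_prop) (by simpa using hκ) ENNReal.ofReal_ne_top hκS
    simpa [ENNReal.ofReal_div_of_pos hκ, ENNReal.ofReal_div_of_pos] using h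
  have hPgood : ∀ t ∈ {t ∈ S | ‖φ t‖ₑ ^ 2 ≤ ENNReal.ofReal (2 / κ) * I},
      ‖P.eval t‖ₑ ^ 2 ≤ 2 * (ENNReal.ofReal (2 / κ) * I + J) := by
    rintro t ⟨htS, ht⟩
    refine (enorm_sq_le_two_mul_add (φ t) (P.eval t)).trans ?_
    gcongr
    exact hφP t (hS htS)
  have hremez := enorm_eval_sq_le_of_forall_mem hP (half_pos hκ)
    ((Set.sep_subset _ _).trans hS) hgood (Set.left_mem_Icc.2 zero_le_one) hPgood
  have h2κ : (1 : ENNReal) ≤ ENNReal.ofReal (2 / κ) := by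
    rw [ENNReal.one_le_ofReal, one_le_div hκ]
    linarith
  calc ‖φ 0‖ₑ ^ 2
      ≤ ENNReal.ofReal ((36 / (κ / 2) ^ 2) ^ (n + 1)) *
          (2 * (ENNReal.ofReal (2 / κ) * I + ENNReal.ofReal (2 / κ) * J)) := by
        rw [← hP0]
        refine hremez.trans ?_
        gcongr
        exact le_mul_of_one_le_left zero_le h2κ
    _ = ENNReal.ofReal (4 / κ * (144 / κ ^ 2) ^ (n + 1)) * (I + J) := by
        have hconst : 4 / κ * (144 / κ ^ 2) ^ (n + 1) =
            (36 / (κ / 2) ^ 2) ^ (n + 1) * (2 * (2 / κ)) := by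
          rw [div_pow κ, div_div_eq_mul_div]
          ring
        rw [← mul_add, hconst, ENNReal.ofReal_mul (by positivity),
          ENNReal.ofReal_mul zero_le_two, ENNReal.ofReal_ofNat]
        ring

end IntervalEstimate

section Segments

/-- The average of `H` over the segment from `x` to `y`, parametrised by `[0, 1]`. For
`H = s.indicator 1` it is the fraction of the segment lying in `s`. -/
noncomputable def segmentAverage {E : Type*} [AddCommGroup E] [Module ℝ E] (H : E → ENNReal)
    (x y : E) : ENNReal :=
  ∫⁻ t in Set.Icc (0 : ℝ) 1, H (AffineMap.lineMap x y t)

section Module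

variable {E : Type*} [AddCommGroup E] [Module ℝ E]

lemma segmentAverage_indicator_one (s : Set E) (x y : E)
    (hs : MeasurableSet (AffineMap.lineMap x y ⁻¹' s : Set ℝ)) :
    segmentAverage (s.indicator 1) x y =
      volume (AffineMap.lineMap x y ⁻¹' s ∩ Set.Icc (0 : ℝ) 1) := by
  rw [← Measure.restrict_apply hs, ← lintegral_indicator_one hs]
  rfl

lemma segmentAverage_indicator_one_le_one (s : Set E) (x y : E) :
    segmentAverage (s.indicator 1) x y ≤ 1 := calc
  segmentAverage (s.indicator 1) x y ≤ ∫⁻ _ in Set.Icc (0 : ℝ) 1, 1 :=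
    lintegral_mono fun _ => Set.indicator_le_self' (by simp) _
  _ = 1 := by simp

lemma segmentAverage_congr_of_mem {B : Set E} (hB : Convex ℝ B) {H₁ H₂ : E → ENNReal}
    (h : ∀ z ∈ B, H₁ z = H₂ z) {x y : E} (hx : x ∈ B) (hy : y ∈ B) :
    segmentAverage H₁ x y = segmentAverage H₂ x y :=
  setLIntegral_congr_fun measurableSet_Icc fun _ ht => h _ (hB.lineMap_mem hx hy ht)

end Module

variable {E : Type*} [NormedAddCommGroup E] [NormedSpace ℝ E]

lemma measurable_segmentAverage [MeasurableSpace E] [BorelSpace E] [SecondCountableTopology E]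
    {H : E → ENNReal} (hH : Measurable H) : Measurable (Function.uncurry (segmentAverage H)) := by
  have hline : Continuous fun p : (E × E) × ℝ => AffineMap.lineMap p.1.1 p.1.2 p.2 := by
    simp only [AffineMap.lineMap_apply]
    fun_prop
  exact (hH.comp hline.measurable).lintegral_prod_right'

lemma segmentAverage_add_const_mul [MeasurableSpace E] [BorelSpace E] {H₁ : E → ENNReal}
    (hH₁ : Measurable H₁) {c : ENNReal} (hc : c ≠ ⊤) (H₂ : E → ENNReal) (x y : E) :
    segmentAverage (fun z => H₁ z + c * H₂ z) x y =
      segmentAverage H₁ x y + c * segmentAverage H₂ x y := by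
  have hH₁' : Measurable fun t : ℝ => H₁ (AffineMap.lineMap x y t) :=
    hH₁.comp AffineMap.lineMap_continuous.measurable
  rw [segmentAverage, lintegral_add_left hH₁', lintegral_const_mul' _ _ hc, segmentAverage,
    segmentAverage]

lemma norm_iteratedDeriv_comp_lineMap_le {F : Type*} [NormedAddCommGroup F] [NormedSpace ℝ F]
    {m : ℕ} {f : E → F} (hf : ContDiff ℝ m f) (x y : E) (t : ℝ) :
    ‖iteratedDeriv m (fun τ => f (AffineMap.lineMap x y τ)) t‖ ≤
      dist x y ^ m * ‖iteratedFDeriv ℝ m f (AffineMap.lineMap x y t)‖ := by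
  set L := ContinuousLinearMap.toSpanSingleton ℝ (y - x)
  have hline : (fun τ => f (AffineMap.lineMap x y τ)) = (fun z => f (z + x)) ∘ L := by
    ext τ
    simp [L, AffineMap.lineMap_apply]
  have hshift : ContDiff ℝ m fun z => f (z + x) := hf.comp (contDiff_id.add contDiff_const)
  rw [← norm_iteratedFDeriv_eq_norm_iteratedDeriv, hline,
    L.iteratedFDeriv_comp_right hshift _ le_rfl, iteratedFDeriv_comp_add_right]
  refine (ContinuousMultilinearMap.norm_compContinuousLinearMap_le _ _).trans_eq ?_
  simp [L, AffineMap.lineMap_apply, mul_comm, dist_eq_norm']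

lemma enorm_sq_le_segmentAverage [MeasurableSpace E] [BorelSpace E] {n : ℕ} {κ r : ℝ} {f : E → ℝ}
    (hf : ContDiff ℝ (n + 1 : ℕ) f) (hκ : 0 < κ) {s : Set E} (hs : MeasurableSet s) {x y : E}
    (hxy : dist x y ≤ r) (hκs : ENNReal.ofReal κ ≤ segmentAverage (s.indicator 1) x y) :
    ‖f x‖ₑ ^ 2 ≤ ENNReal.ofReal (4 / κ * (144 / κ ^ 2) ^ (n + 1)) *
      segmentAverage (fun z => s.indicator (fun z => ‖f z‖ₑ ^ 2) z +
        ENNReal.ofReal (r ^ (2 * (n + 1)) / n.factorial ^ 2) *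
          ‖iteratedFDeriv ℝ (n + 1) f z‖ₑ ^ 2) x y := by
  have hline : Continuous (AffineMap.lineMap x y : ℝ → E) := AffineMap.lineMap_continuous
  have hs' : MeasurableSet (AffineMap.lineMap x y ⁻¹' s : Set ℝ) := hline.measurable hs
  rw [segmentAverage_indicator_one s x y hs'] at hκs
  have hφ : ContDiff ℝ (n + 1 : ℕ) fun t => f (AffineMap.lineMap x y t) :=
    hf.comp (AffineMap.contDiff_lineMap x y)
  have hinside : ∫⁻ t in AffineMap.lineMap x y ⁻¹' s ∩ Set.Icc (0 : ℝ) 1,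
      ‖f (AffineMap.lineMap x y t)‖ₑ ^ 2 =
        segmentAverage (s.indicator fun z => ‖f z‖ₑ ^ 2) x y := by
    rw [← Measure.restrict_restrict hs', ← lintegral_indicator hs']
    rfl
  have hderiv : ∫⁻ t in Set.Icc (0 : ℝ) 1,
      ‖iteratedDeriv (n + 1) (fun τ => f (AffineMap.lineMap x y τ)) t‖ₑ ^ 2 ≤
        ENNReal.ofReal (r ^ (2 * (n + 1))) *
          segmentAverage (fun z => ‖iteratedFDeriv ℝ (n + 1) f z‖ₑ ^ 2) x y := by
    rw [segmentAverage, ← lintegral_const_mul' _ _ ENNReal.ofReal_ne_top]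
    refine lintegral_mono fun t => ?_
    have hr : 0 ≤ r := dist_nonneg.trans hxy
    rw [mul_comm 2, pow_mul, ENNReal.ofReal_pow (by positivity), ← mul_pow, ← ofReal_norm,
      ← ofReal_norm, ← ENNReal.ofReal_mul (by positivity)]
    gcongr
    exact (norm_iteratedDeriv_comp_lineMap_le hf x y t).trans (by gcongr)
  have hmain := enorm_zero_sq_le_lintegral_add_lintegral hφ hκ Set.inter_subset_right hκs
  rw [hinside, AffineMap.lineMap_apply_zero] at hmain
  refine hmain.trans ?_
  have hsplit : ENNReal.ofReal (r ^ (2 * (n + 1)) / n.factorial ^ 2) =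
      ENNReal.ofReal (1 / n.factorial ^ 2) * ENNReal.ofReal (r ^ (2 * (n + 1))) := by
    rw [← ENNReal.ofReal_mul (by positivity), one_div_mul_eq_div]
  rw [segmentAverage_add_const_mul ((hf.continuous.enorm.measurable.pow_const 2).indicator hs)
    ENNReal.ofReal_ne_top, hsplit, mul_assoc (ENNReal.ofReal (1 / _))]
  gcongr

end Segments

lemma measure_le_measure_setOf_le_of_le_setLIntegral {α : Type*} [MeasurableSpace α]
    {ν : Measure α} {B : Set α} (hνB : ν B ≠ ⊤) {g : α → ENNReal}
    (hg : Measurable g) (hg1 : ∀ y, g y ≤ 1) {κ : ENNReal} (hκ : κ ≠ ⊤)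
    (h : 2 * κ * ν B ≤ ∫⁻ y in B, g y ∂ν) : κ * ν B ≤ ν {y ∈ B | κ ≤ g y} := by
  have hY : MeasurableSet {y | κ ≤ g y} := measurableSet_le measurable_const hg
  refine ENNReal.le_of_add_le_add_right (ENNReal.mul_ne_top hκ hνB) ?_
  calc κ * ν B + κ * ν B ≤ ∫⁻ y in B, g y ∂ν := by rwa [← two_mul, ← mul_assoc]
    _ ≤ ∫⁻ y in B, ({y | κ ≤ g y}.indicator 1 y + κ) ∂ν := by
        refine lintegral_mono fun y => ?_
        by_cases hy : κ ≤ g y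
        · rw [Set.indicator_of_mem (s := {y | κ ≤ g y}) hy]
          exact (hg1 y).trans le_self_add
        · exact (not_le.1 hy).le.trans le_add_self
    _ = ν {y ∈ B | κ ≤ g y} + κ * ν B := by
        rw [lintegral_add_right _ measurable_const, lintegral_indicator_one hY, setLIntegral_const,
          Measure.restrict_apply hY, Set.inter_comm]
        rfl

lemma one_sub_half_le_pow {γ t : ℝ} (hγ0 : 0 ≤ γ) (hγ1 : γ ≤ 1) {d : ℕ}
    (ht : 1 - γ / (2 * (d + 1)) ≤ t) : 1 - γ / 2 ≤ t ^ d := by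
  have hle : γ / (2 * (d + 1)) ≤ 1 := by
    rw [div_le_one (by positivity)]
    linarith
  have hmul : d * (γ / (2 * (d + 1))) ≤ γ / 2 := by
    rw [mul_div_assoc', div_le_div_iff₀ (by positivity) two_pos]
    nlinarith
  calc 1 - γ / 2 ≤ 1 + d * -(γ / (2 * (d + 1))) := by linarith
    _ ≤ (1 + -(γ / (2 * (d + 1)))) ^ d := one_add_mul_le_pow (by linarith) d
    _ ≤ t ^ d := by gcongr <;> linarith

section Averaging

variable {E : Type*} [NormedAddCommGroup E] [NormedSpace ℝ E] [FiniteDimensional ℝ E]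
  [MeasurableSpace E] [BorelSpace E] (μ : Measure E)

lemma mul_enorm_sq_le_setLIntegral_segmentAverage {f : E → ℝ} {n : ℕ}
    (hf : ContDiff ℝ (n + 1 : ℕ) f) {B s : Set E} (hB : Convex ℝ B) (hBm : MeasurableSet B)
    {r : ℝ} (hr : ∀ x ∈ B, ∀ y ∈ B, dist x y ≤ r) (hs : MeasurableSet s) {x : E} (hx : x ∈ B)
    {κ : ℝ} (hκ : 0 < κ) (hvis : ENNReal.ofReal κ * μ B ≤
      μ {y ∈ B | ENNReal.ofReal κ ≤ segmentAverage (s.indicator 1) x y}) :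
    ENNReal.ofReal κ * μ B * ‖f x‖ₑ ^ 2 ≤
      ENNReal.ofReal (4 / κ * (144 / κ ^ 2) ^ (n + 1)) *
        ∫⁻ y in B, segmentAverage (fun z => s.indicator (fun z => ‖f z‖ₑ ^ 2) z +
          ENNReal.ofReal (r ^ (2 * (n + 1)) / n.factorial ^ 2) *
            B.indicator (fun z => ‖iteratedFDeriv ℝ (n + 1) f z‖ₑ ^ 2) z) x y ∂μ := by
  set Y := {y ∈ B | ENNReal.ofReal κ ≤ segmentAverage (s.indicator 1) x y}
  have hY : MeasurableSet Y := hBm.inter <| measurableSet_le measurable_const <|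
    (measurable_segmentAverage (measurable_one.indicator hs)).comp measurable_prodMk_left
  rw [← lintegral_const_mul' _ _ ENNReal.ofReal_ne_top]
  calc ENNReal.ofReal κ * μ B * ‖f x‖ₑ ^ 2
      ≤ ∫⁻ _ in Y, ‖f x‖ₑ ^ 2 ∂μ := by
        rw [setLIntegral_const, mul_comm]
        gcongr
    _ ≤ ∫⁻ y in Y, _ ∂μ := setLIntegral_mono' hY fun y hy =>
        (enorm_sq_le_segmentAverage hf hκ hs (hr x hx y hy.1) hy.2).trans_eq <| by
          congr 1
          refine segmentAverage_congr_of_mem hB (fun z hz => ?_) hx hy.1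
          rw [Set.indicator_of_mem hz]
    _ ≤ _ := lintegral_mono_set (Set.sep_subset _ _)

variable [μ.IsAddHaarMeasure]

lemma lintegral_lineMap_right_le {H : E → ENNReal} (hH : Measurable H) (x : E) {t : ℝ}
    (ht : 1 / 2 ≤ t) :
    ∫⁻ y, H (AffineMap.lineMap x y t) ∂μ ≤ 2 ^ Module.finrank ℝ E * ∫⁻ z, H z ∂μ := by
  have ht0 : 0 < t := by linarith
  calc ∫⁻ y, H (AffineMap.lineMap x y t) ∂μ = ∫⁻ y, H (t • y + x) ∂μ := by
        simp only [AffineMap.lineMap_apply, vsub_eq_sub, vadd_eq_add]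
        exact lintegral_sub_right_eq_self (fun y => H (t • y + x)) x
    _ = ∫⁻ z, H (z + x) ∂(μ.map (t • ·)) :=
        (lintegral_map (hH.comp (measurable_id.add_const x)) (measurable_const_smul t)).symm
    _ = ENNReal.ofReal ((t ^ Module.finrank ℝ E)⁻¹) * ∫⁻ z, H z ∂μ := by
        rw [Measure.map_addHaar_smul μ ht0.ne', lintegral_smul_measure,
          lintegral_add_right_eq_self H, abs_of_pos (by positivity), smul_eq_mul]
    _ ≤ 2 ^ Module.finrank ℝ E * ∫⁻ z, H z ∂μ := by
        gcongr
        rw [← inv_pow, ENNReal.ofReal_pow (by positivity)]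
        gcongr
        exact ENNReal.ofReal_le_of_le_toReal (inv_le_of_inv_le₀ two_pos (by simpa using ht))

lemma setLIntegral_setLIntegral_lineMap_le {H : E → ENNReal} (hH : Measurable H) (B : Set E)
    {t : ℝ} :
    ∫⁻ x in B, ∫⁻ y in B, H (AffineMap.lineMap x y t) ∂μ ∂μ ≤
      2 ^ Module.finrank ℝ E * μ B * ∫⁻ z, H z ∂μ := by
  have hhalf {τ : ℝ} (hτ : 1 / 2 ≤ τ) :
      ∫⁻ x in B, ∫⁻ y in B, H (AffineMap.lineMap x y τ) ∂μ ∂μ ≤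
        2 ^ Module.finrank ℝ E * μ B * ∫⁻ z, H z ∂μ := calc
    _ ≤ ∫⁻ _ in B, 2 ^ Module.finrank ℝ E * ∫⁻ z, H z ∂μ ∂μ :=
      lintegral_mono fun x => (setLIntegral_le_lintegral _ _).trans
        (lintegral_lineMap_right_le μ hH x hτ)
    _ = 2 ^ Module.finrank ℝ E * μ B * ∫⁻ z, H z ∂μ := by
      rw [setLIntegral_const]
      ring
  rcases le_total (1 / 2) t with ht | ht
  · exact hhalf ht
  have hline : Measurable fun p : E × E => H (AffineMap.lineMap p.1 p.2 t) := by
    simp only [AffineMap.lineMap_apply, vsub_eq_sub, vadd_eq_add]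
    fun_prop
  rw [lintegral_lintegral_swap hline.aemeasurable]
  simp only [← AffineMap.lineMap_apply_one_sub _ _ t]
  exact hhalf (by linarith)

lemma setLIntegral_setLIntegral_segmentAverage_le {H : E → ENNReal} (hH : Measurable H)
    (B : Set E) :
    ∫⁻ x in B, ∫⁻ y in B, segmentAverage H x y ∂μ ∂μ ≤
      2 ^ Module.finrank ℝ E * μ B * ∫⁻ z, H z ∂μ := by
  have hline : Measurable fun p : (E × E) × ℝ => H (AffineMap.lineMap p.1.1 p.1.2 p.2) := by
    simp only [AffineMap.lineMap_apply, vsub_eq_sub, vadd_eq_add]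
    fun_prop
  calc ∫⁻ x in B, ∫⁻ y in B, segmentAverage H x y ∂μ ∂μ
      = ∫⁻ p, segmentAverage H p.1 p.2 ∂((μ.restrict B).prod (μ.restrict B)) :=
        (lintegral_prod (fun p : E × E => segmentAverage H p.1 p.2)
          (measurable_segmentAverage hH).aemeasurable).symm
    _ = ∫⁻ t in Set.Icc (0 : ℝ) 1, ∫⁻ p, H (AffineMap.lineMap p.1 p.2 t)
          ∂((μ.restrict B).prod (μ.restrict B)) :=
        lintegral_lintegral_swap (f := fun (p : E × E) (t : ℝ) => H (AffineMap.lineMap p.1 p.2 t))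
          hline.aemeasurable
    _ = ∫⁻ t in Set.Icc (0 : ℝ) 1,
          ∫⁻ x in B, ∫⁻ y in B, H (AffineMap.lineMap x y t) ∂μ ∂μ :=
        lintegral_congr fun t => lintegral_prod
          (fun p : E × E => H (AffineMap.lineMap p.1 p.2 t))
          (hline.comp (measurable_id.prodMk measurable_const)).aemeasurable
    _ ≤ ∫⁻ _ in Set.Icc (0 : ℝ) 1, 2 ^ Module.finrank ℝ E * μ B * ∫⁻ z, H z ∂μ :=
        lintegral_mono fun _ => setLIntegral_setLIntegral_lineMap_le μ hH B
    _ = 2 ^ Module.finrank ℝ E * μ B * ∫⁻ z, H z ∂μ := by simp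

lemma mul_measure_le_measure_lineMap_preimage {B s : Set E} (hB : Convex ℝ B) (hμB : μ B ≠ ⊤)
    (hs : MeasurableSet s) (hsB : s ⊆ B) {γ : ℝ} (hγ0 : 0 ≤ γ) (hγ1 : γ ≤ 1)
    (hγs : ENNReal.ofReal γ * μ B ≤ μ s) {x : E} (hx : x ∈ B) {t : ℝ}
    (ht0 : 0 ≤ t) (ht : 1 - γ / (2 * (Module.finrank ℝ E + 1)) ≤ t) (ht1 : t ≤ 1) :
    ENNReal.ofReal (γ / 2) * μ B ≤ μ (B ∩ (AffineMap.lineMap x · t) ⁻¹' s) := by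
  set d := Module.finrank ℝ E
  have hpow : 1 - γ / 2 ≤ t ^ d := one_sub_half_le_pow hγ0 hγ1 ht
  set φ : E → E := (AffineMap.lineMap x · t)
  have himage (A : Set E) : μ (φ '' A) = ENNReal.ofReal (t ^ d) * μ A := by
    rw [← abs_of_nonneg (by positivity : 0 ≤ t ^ d), ← Measure.addHaar_image_homothety μ x t A]
    rfl
  have hunion : φ '' B ∪ s ⊆ B :=
    Set.union_subset (Set.image_subset_iff.2 fun y hy => hB.lineMap_mem hx hy ⟨ht0, ht1⟩) hsB
  have hinter : μ (φ '' B ∩ s) ≤ μ (B ∩ φ ⁻¹' s) := by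
    rw [← Set.image_inter_preimage, himage]
    exact mul_le_of_le_one_left' (ENNReal.ofReal_le_one.2 (pow_le_one₀ ht0 ht1))
  refine ENNReal.le_of_add_le_add_left hμB ?_
  calc μ B + ENNReal.ofReal (γ / 2) * μ B
      = ENNReal.ofReal (1 - γ / 2) * μ B + ENNReal.ofReal γ * μ B := by
        rw [← add_mul, ← one_add_mul, ← ENNReal.ofReal_one, ← ENNReal.ofReal_add,
          ← ENNReal.ofReal_add]
        · ring_nf
        all_goals linarith
    _ ≤ μ (φ '' B) + μ s := by
        rw [himage]
        gcongr
    _ = μ (φ '' B ∪ s) + μ (φ '' B ∩ s) := (measure_union_add_inter _ hs).symm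
    _ ≤ μ B + μ (B ∩ φ ⁻¹' s) := add_le_add (measure_mono hunion) hinter

lemma mul_measure_le_setLIntegral_segmentAverage {B s : Set E} (hB : Convex ℝ B) (hμB : μ B ≠ ⊤)
    (hs : MeasurableSet s) (hsB : s ⊆ B) {γ : ℝ} (hγ0 : 0 ≤ γ) (hγ1 : γ ≤ 1)
    (hγs : ENNReal.ofReal γ * μ B ≤ μ s) {x : E} (hx : x ∈ B) :
    ENNReal.ofReal (γ ^ 2 / (4 * (Module.finrank ℝ E + 1))) * μ B ≤
      ∫⁻ y in B, segmentAverage (s.indicator 1) x y ∂μ := by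
  set τ := γ / (2 * (Module.finrank ℝ E + 1 : ℝ)) with hτ
  have hτ1 : τ ≤ 1 := by
    rw [hτ, div_le_one (by positivity)]
    nlinarith [(Nat.cast_nonneg _ : (0 : ℝ) ≤ Module.finrank ℝ E)]
  have hline : Measurable fun p : E × ℝ => AffineMap.lineMap x p.1 p.2 := by
    simp only [AffineMap.lineMap_apply, vsub_eq_sub, vadd_eq_add]
    fun_prop
  have hslice (t : ℝ) : MeasurableSet ((AffineMap.lineMap x · t) ⁻¹' s) :=
    (hline.comp measurable_prodMk_right) hs
  calc ENNReal.ofReal (γ ^ 2 / (4 * (Module.finrank ℝ E + 1))) * μ B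
      = ∫⁻ _ in Set.Icc (1 - τ) 1, ENNReal.ofReal (γ / 2) * μ B := by
        rw [setLIntegral_const, Real.volume_Icc, sub_sub_cancel, mul_right_comm,
          ← ENNReal.ofReal_mul (by positivity), hτ, div_mul_div_comm]
        ring_nf
    _ ≤ ∫⁻ t in Set.Icc (1 - τ) 1, ∫⁻ y in B, s.indicator 1 (AffineMap.lineMap x y t) ∂μ := by
        refine setLIntegral_mono' measurableSet_Icc fun t ht => ?_
        refine (mul_measure_le_measure_lineMap_preimage μ hB hμB hs hsB hγ0 hγ1 hγs hx
          (by linarith [ht.1]) ht.1 ht.2).trans_eq ?_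
        rw [Set.inter_comm, ← Measure.restrict_apply (hslice t),
          ← lintegral_indicator_one (hslice t)]
        rfl
    _ ≤ ∫⁻ t in Set.Icc (0 : ℝ) 1, ∫⁻ y in B, s.indicator 1 (AffineMap.lineMap x y t) ∂μ :=
        lintegral_mono_set (Set.Icc_subset_Icc_left (by linarith))
    _ = ∫⁻ y in B, segmentAverage (s.indicator 1) x y ∂μ :=
        lintegral_lintegral_swap (f := fun (t : ℝ) y => s.indicator 1 (AffineMap.lineMap x y t))
          ((measurable_one.indicator hs).comp (hline.comp measurable_swap)).aemeasurable

lemma mul_measure_le_measure_setOf_le_segmentAverage {B s : Set E} (hB : Convex ℝ B)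
    (hμB : μ B ≠ ⊤) (hs : MeasurableSet s) (hsB : s ⊆ B) {γ : ℝ} (hγ0 : 0 ≤ γ) (hγ1 : γ ≤ 1)
    (hγs : ENNReal.ofReal γ * μ B ≤ μ s) {x : E} (hx : x ∈ B) {κ : ℝ}
    (hκ : κ = γ ^ 2 / (8 * (Module.finrank ℝ E + 1))) :
    ENNReal.ofReal κ * μ B ≤
      μ {y ∈ B | ENNReal.ofReal κ ≤ segmentAverage (s.indicator 1) x y} := by
  refine measure_le_measure_setOf_le_of_le_setLIntegral hμB
    ((measurable_segmentAverage (measurable_one.indicator hs)).comp measurable_prodMk_left)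
    (segmentAverage_indicator_one_le_one s x) ENNReal.ofReal_ne_top ?_
  refine le_of_eq_of_le ?_
    (mul_measure_le_setLIntegral_segmentAverage μ hB hμB hs hsB hγ0 hγ1 hγs hx)
  rw [← ENNReal.ofReal_ofNat, ← ENNReal.ofReal_mul two_pos.le, hκ]
  congr 2
  field_simp
  ring

lemma setLIntegral_enorm_sq_le_of_visible {f : E → ℝ} {n : ℕ}
    (hf : ContDiff ℝ (n + 1 : ℕ) f) {B s : Set E} (hB : Convex ℝ B) (hBm : MeasurableSet B)
    (hμB : μ B ≠ ⊤) {r : ℝ} (hr : ∀ x ∈ B, ∀ y ∈ B, dist x y ≤ r) (hs : MeasurableSet s)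
    {κ : ℝ} (hκ : 0 < κ) (hvis : ∀ x ∈ B, ENNReal.ofReal κ * μ B ≤
      μ {y ∈ B | ENNReal.ofReal κ ≤ segmentAverage (s.indicator 1) x y}) :
    ∫⁻ x in B, ‖f x‖ₑ ^ 2 ∂μ ≤
      ENNReal.ofReal (2 ^ Module.finrank ℝ E / κ * (4 / κ * (144 / κ ^ 2) ^ (n + 1))) *
        (∫⁻ x in s, ‖f x‖ₑ ^ 2 ∂μ + ENNReal.ofReal (r ^ (2 * (n + 1)) / n.factorial ^ 2) *
          ∫⁻ x in B, ‖iteratedFDeriv ℝ (n + 1) f x‖ₑ ^ 2 ∂μ) := by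
  rcases eq_or_ne (μ B) 0 with hB0 | hB0
  · simp [Measure.restrict_eq_zero.2 hB0]
  set C := 4 / κ * (144 / κ ^ 2) ^ (n + 1)
  set c := ENNReal.ofReal (r ^ (2 * (n + 1)) / n.factorial ^ 2)
  set H : E → ENNReal := fun z => s.indicator (fun z => ‖f z‖ₑ ^ 2) z +
    c * B.indicator (fun z => ‖iteratedFDeriv ℝ (n + 1) f z‖ₑ ^ 2) z
  have hfs : Measurable (s.indicator fun z => ‖f z‖ₑ ^ 2) :=
    (hf.continuous.measurable.enorm.pow_const 2).indicator hs
  have hDB : Measurable (B.indicator fun z => ‖iteratedFDeriv ℝ (n + 1) f z‖ₑ ^ 2) :=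
    ((hf.continuous_iteratedFDeriv le_rfl).enorm.measurable.pow_const 2).indicator hBm
  have hH : ∫⁻ z, H z ∂μ = ∫⁻ x in s, ‖f x‖ₑ ^ 2 ∂μ +
      c * ∫⁻ x in B, ‖iteratedFDeriv ℝ (n + 1) f x‖ₑ ^ 2 ∂μ := by
    rw [lintegral_add_left hfs, lintegral_const_mul _ hDB, lintegral_indicator hs,
      lintegral_indicator hBm]
  have hκtop : ENNReal.ofReal κ * μ B ≠ ⊤ := ENNReal.mul_ne_top ENNReal.ofReal_ne_top hμB
  have hκ0 : ENNReal.ofReal κ * μ B ≠ 0 := mul_ne_zero (ENNReal.ofReal_pos.2 hκ).ne' hB0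
  have hconst : ENNReal.ofReal κ * ENNReal.ofReal (2 ^ Module.finrank ℝ E / κ * C) =
      2 ^ Module.finrank ℝ E * ENNReal.ofReal C := by
    rw [← ENNReal.ofReal_ofNat, ← ENNReal.ofReal_pow two_pos.le, ← ENNReal.ofReal_mul hκ.le,
      ← ENNReal.ofReal_mul (by positivity)]
    congr 1
    field_simp
  rw [← hH, ← ENNReal.mul_le_mul_iff_right hκ0 hκtop]
  calc ENNReal.ofReal κ * μ B * ∫⁻ x in B, ‖f x‖ₑ ^ 2 ∂μ
      ≤ ∫⁻ x in B, ENNReal.ofReal C * ∫⁻ y in B, segmentAverage H x y ∂μ ∂μ := by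
        rw [← lintegral_const_mul' _ _ hκtop]
        exact setLIntegral_mono' hBm fun x hx =>
          mul_enorm_sq_le_setLIntegral_segmentAverage μ hf hB hBm hr hs hx hκ (hvis x hx)
    _ ≤ ENNReal.ofReal C * (2 ^ Module.finrank ℝ E * μ B * ∫⁻ z, H z ∂μ) := by
        rw [lintegral_const_mul' _ _ ENNReal.ofReal_ne_top]
        gcongr
        exact setLIntegral_setLIntegral_segmentAverage_le μ (hfs.add (hDB.const_mul c)) B
    _ = ENNReal.ofReal κ * μ B *
          (ENNReal.ofReal (2 ^ Module.finrank ℝ E / κ * C) * ∫⁻ z, H z ∂μ) := by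
        rw [mul_mul_mul_comm, hconst]
        ring

lemma setLIntegral_enorm_sq_le_of_convex {f : E → ℝ} {n : ℕ} (hf : ContDiff ℝ (n + 1 : ℕ) f)
    {B s : Set E} (hB : Convex ℝ B) (hBm : MeasurableSet B) (hμB : μ B ≠ ⊤) {r : ℝ}
    (hr : ∀ x ∈ B, ∀ y ∈ B, dist x y ≤ r) (hs : MeasurableSet s) (hsB : s ⊆ B) {γ : ℝ}
    (hγ0 : 0 < γ) (hγ1 : γ ≤ 1) (hγs : ENNReal.ofReal γ * μ B ≤ μ s) {κ : ℝ}
    (hκ : κ = γ ^ 2 / (8 * (Module.finrank ℝ E + 1))) :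
    ∫⁻ x in B, ‖f x‖ₑ ^ 2 ∂μ ≤
      ENNReal.ofReal (2 ^ Module.finrank ℝ E / κ * (4 / κ * (144 / κ ^ 2) ^ (n + 1))) *
        (∫⁻ x in s, ‖f x‖ₑ ^ 2 ∂μ + ENNReal.ofReal (r ^ (2 * (n + 1)) / n.factorial ^ 2) *
          ∫⁻ x in B, ‖iteratedFDeriv ℝ (n + 1) f x‖ₑ ^ 2 ∂μ) :=
  setLIntegral_enorm_sq_le_of_visible μ hf hB hBm hμB hr hs (by rw [hκ]; positivity) fun _ hx =>
    mul_measure_le_measure_setOf_le_segmentAverage μ hB hμB hs hsB hγ0.le hγ1 hγs hx hκ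

end Averaging

section Covering

variable {X : Type*} [MetricSpace X] [SecondCountableTopology X] [HasBesicovitchCovering X]
  [MeasurableSpace X] [OpensMeasurableSpace X]

variable (X) in
lemma exists_measure_le_nat_mul_of_forall_ball_le : ∃ N : ℕ, ∀ (μ₁ μ₂ : Measure X) (ρ : X → ℝ),
    (∀ x, 0 < ρ x) → (∀ x, μ₁ (Metric.ball x (ρ x)) ≤ μ₂ (Metric.ball x (ρ x))) →
    ∀ s, BddAbove (ρ '' s) → μ₁ s ≤ N * μ₂ Set.univ := by
  obtain ⟨N, τ, hτ, hN⟩ := HasBesicovitchCovering.no_satelliteConfig (α := X)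
  refine ⟨N, fun μ₁ μ₂ ρ hρ hle s ⟨M, hM⟩ => ?_⟩
  let q : Besicovitch.BallPackage s X :=
    { c := Subtype.val
      r := fun x => ρ x
      rpos := fun x => hρ x
      r_bound := M
      r_le := fun x => hM ⟨x, x.2, rfl⟩ }
  obtain ⟨u, hu, hcover⟩ := Besicovitch.exist_disjoint_covering_families hτ hN q
  have hdisj (i : Fin N) : (u i).PairwiseDisjoint fun x => Metric.ball x.1 (ρ x) :=
    (hu i).mono fun _ => Metric.ball_subset_closedBall
  have hcountable (i : Fin N) : (u i).Countable :=
    (hdisj i).countable_of_isOpen (fun _ _ => Metric.isOpen_ball)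
      fun _ _ => Metric.nonempty_ball.2 (hρ _)
  have hfamily (i : Fin N) : μ₁ (⋃ x ∈ u i, Metric.ball x.1 (ρ x)) ≤ μ₂ Set.univ := by
    have hsum (ν : Measure X) : ν (⋃ x ∈ u i, Metric.ball x.1 (ρ x)) =
        ∑' x : u i, ν (Metric.ball x.1.1 (ρ x.1)) :=
      measure_biUnion (hcountable i) (hdisj i) fun _ _ => measurableSet_ball
    calc μ₁ (⋃ x ∈ u i, Metric.ball x.1 (ρ x))
        ≤ μ₂ (⋃ x ∈ u i, Metric.ball x.1 (ρ x)) := by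
          rw [hsum, hsum]
          exact ENNReal.tsum_le_tsum fun x => hle x.1
      _ ≤ μ₂ Set.univ := measure_mono (Set.subset_univ _)
  calc μ₁ s ≤ μ₁ (⋃ i, ⋃ x ∈ u i, Metric.ball x.1 (ρ x)) :=
        measure_mono fun x hx => hcover ⟨⟨x, hx⟩, rfl⟩
    _ ≤ ∑ i, μ₁ (⋃ x ∈ u i, Metric.ball x.1 (ρ x)) := by
        simpa only [tsum_fintype] using measure_iUnion_le fun i => ⋃ x ∈ u i, Metric.ball x.1 (ρ x)
    _ ≤ ∑ _ : Fin N, μ₂ Set.univ := Finset.sum_le_sum fun i _ => hfamily i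
    _ = N * μ₂ Set.univ := by simp

variable (X) in
lemma exists_measure_univ_le_nat_mul_of_forall_ball_le :
    ∃ N : ℕ, ∀ (μ₁ μ₂ : Measure X) (ρ : X → ℝ), (∀ x, 0 < ρ x) →
      (∀ x, μ₁ (Metric.ball x (ρ x)) ≤ μ₂ (Metric.ball x (ρ x))) →
      (∀ s, Bornology.IsBounded s → BddAbove (ρ '' s)) → μ₁ Set.univ ≤ N * μ₂ Set.univ := by
  obtain ⟨N, hN⟩ := exists_measure_le_nat_mul_of_forall_ball_le X
  refine ⟨N, fun μ₁ μ₂ ρ hρ hle hbdd => ?_⟩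
  rcases isEmpty_or_nonempty X with _ | ⟨⟨x₀⟩⟩
  · simp [Set.univ_eq_empty_iff.2]
  have hmono : Monotone fun n : ℕ => Metric.ball x₀ n := fun _ _ h =>
    Metric.ball_subset_ball (by exact_mod_cast h)
  rw [← Metric.iUnion_ball_nat x₀, hmono.measure_iUnion, Metric.iUnion_ball_nat]
  exact iSup_le fun n => hN μ₁ μ₂ ρ hρ hle _ (hbdd _ Metric.isBounded_ball)

end Covering

section Weight

variable {E : Type*} [NormedAddCommGroup E] {R δ η r₀ r : ℝ}

lemma bddAbove_image_of_le_rpow {ρ : E → ℝ} (hR : 0 ≤ R) (hδ : 0 ≤ δ)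
    (hρ : ∀ x, ρ x ≤ R * (1 + ‖x‖ ^ 2) ^ (δ / 2)) {s : Set E} (hs : Bornology.IsBounded s) :
    BddAbove (ρ '' s) := by
  obtain ⟨L, hL⟩ := hs.exists_norm_le
  refine ⟨R * (1 + L ^ 2) ^ (δ / 2), ?_⟩
  rintro _ ⟨x, hx, rfl⟩
  refine (hρ x).trans ?_
  gcongr
  exact hL x hx

lemma one_add_norm_sq_le_of_mem_ball (hη0 : 0 ≤ η) (hη1 : η < 1) {x y : E}
    (hr : r₀ ≤ ‖x‖ → r ≤ η * ‖x‖) (hy : y ∈ Metric.ball x r) :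
    1 + ‖x‖ ^ 2 ≤ (1 + r₀ ^ 2) / (1 - η) ^ 2 * (1 + ‖y‖ ^ 2) := by
  have hη : 0 < 1 - η := by linarith
  rw [div_mul_eq_mul_div, le_div_iff₀ (by positivity)]
  have hη_sq : (1 - η) ^ 2 ≤ 1 := pow_le_one₀ hη.le (by linarith)
  rcases le_or_gt r₀ ‖x‖ with hx | hx
  · have htri : ‖x‖ ≤ ‖y‖ + ‖y - x‖ := norm_le_norm_add_norm_sub' x y |>.trans_eq (by
      rw [norm_sub_rev])
    rw [mem_ball_iff_norm] at hy
    have hxy : ‖x‖ ^ 2 * (1 - η) ^ 2 ≤ ‖y‖ ^ 2 := by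
      rw [← mul_pow]
      exact pow_le_pow_left₀ (by positivity) (by linarith [hr hx]) 2
    calc (1 + ‖x‖ ^ 2) * (1 - η) ^ 2 ≤ 1 + ‖y‖ ^ 2 := by linarith
      _ ≤ (1 + r₀ ^ 2) * (1 + ‖y‖ ^ 2) := le_mul_of_one_le_left (by positivity) (by nlinarith)
  · calc (1 + ‖x‖ ^ 2) * (1 - η) ^ 2 ≤ (1 + r₀ ^ 2) * 1 := by gcongr
      _ ≤ (1 + r₀ ^ 2) * (1 + ‖y‖ ^ 2) := by gcongr; nlinarith [sq_nonneg ‖y‖]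

lemma two_mul_pow_le_mul_weight_of_mem_ball (hη0 : 0 ≤ η) (hη1 : η < 1) {x y : E}
    (hrR : r ≤ R * (1 + ‖x‖ ^ 2) ^ (δ / 2)) (hrη : r₀ ≤ ‖x‖ → r ≤ η * ‖x‖)
    {m p : ℕ} (hp : δ * m ≤ p) (hpm : p ≤ m) (hy : y ∈ Metric.ball x r) :
    (2 * r) ^ (2 * m) ≤
      (4 * R ^ 2 * ((1 + r₀ ^ 2) / (1 - η) ^ 2)) ^ m * (1 + ‖y‖ ^ 2) ^ p := by
  set C := (1 + r₀ ^ 2) / (1 - η) ^ 2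
  have hη : 0 < 1 - η := by linarith
  have hC : 1 ≤ C := by
    rw [one_le_div₀ (by positivity)]
    exact (pow_le_one₀ hη.le (by linarith)).trans (by nlinarith)
  have hr0 : 0 ≤ r := (Metric.pos_of_mem_ball hy).le
  have hx1 : 1 ≤ 1 + ‖x‖ ^ 2 := by nlinarith
  calc (2 * r) ^ (2 * m) ≤ (2 * (R * (1 + ‖x‖ ^ 2) ^ (δ / 2))) ^ (2 * m) := by
        gcongr
    _ = (4 * R ^ 2) ^ m * (1 + ‖x‖ ^ 2) ^ (δ * m) := by
        rw [← mul_assoc, mul_pow, pow_mul (2 * R), ← Real.rpow_mul_natCast (by positivity)]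
        congr 2
        · ring
        · push_cast
          ring
    _ ≤ (4 * R ^ 2) ^ m * (1 + ‖x‖ ^ 2) ^ p := by
        rw [← Real.rpow_natCast (1 + ‖x‖ ^ 2) p]
        gcongr
    _ ≤ (4 * R ^ 2) ^ m * (C ^ m * (1 + ‖y‖ ^ 2) ^ p) := by
        gcongr
        calc (1 + ‖x‖ ^ 2) ^ p ≤ (C * (1 + ‖y‖ ^ 2)) ^ p := by
              gcongr
              exact one_add_norm_sq_le_of_mem_ball hη0 hη1 hrη hy
          _ ≤ C ^ m * (1 + ‖y‖ ^ 2) ^ p := by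
              rw [mul_pow]
              gcongr
    _ = (4 * R ^ 2 * C) ^ m * (1 + ‖y‖ ^ 2) ^ p := by rw [mul_pow (4 * R ^ 2), mul_assoc]

end Weight

section CoordinateDerivatives

variable {d : ℕ} {f : EuclideanSpace ℝ (Fin d) → ℝ}

lemma contDiff_pderivE (i : Fin d) (hf : ContDiff ℝ (⊤ : ℕ∞) f) :
    ContDiff ℝ (⊤ : ℕ∞) (pderivE i f) :=
  (hf.fderiv_right (by simp)).clm_apply contDiff_const

lemma contDiff_pderivE_iterate (i : Fin d) (hf : ContDiff ℝ (⊤ : ℕ∞) f) (k : ℕ) :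
    ContDiff ℝ (⊤ : ℕ∞) ((pderivE i)^[k] f) :=
  Function.Iterate.rec (fun g => ContDiff ℝ (⊤ : ℕ∞) g) hf (fun _ => contDiff_pderivE i) k

lemma pderivE_pderivE_apply (i j : Fin d) (hf : ContDiff ℝ 2 f) (x : EuclideanSpace ℝ (Fin d)) :
    pderivE i (pderivE j f) x =
      fderiv ℝ (fderiv ℝ f) x (EuclideanSpace.single i 1) (EuclideanSpace.single j 1) := by
  have hf' : Differentiable ℝ (fderiv ℝ f) :=
    (hf.fderiv_right (m := 1) (by norm_num)).differentiable one_ne_zero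
  unfold pderivE
  simp [fderiv_clm_apply (hf' x) (differentiableAt_const _)]

lemma pderivE_comm (i j : Fin d) (hf : ContDiff ℝ 2 f) :
    pderivE i (pderivE j f) = pderivE j (pderivE i f) := by
  ext x
  rw [pderivE_pderivE_apply i j hf, pderivE_pderivE_apply j i hf]
  exact (hf.contDiffAt.isSymmSndFDerivAt (by simp)) _ _

lemma pderivE_iterate_comm (i j : Fin d) (hf : ContDiff ℝ (⊤ : ℕ∞) f) (k : ℕ) :
    pderivE i ((pderivE j)^[k] f) = (pderivE j)^[k] (pderivE i f) := by
  induction k with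
  | zero => rfl
  | succ k ih =>
    have hk : ContDiff ℝ 2 ((pderivE j)^[k] f) :=
      (contDiff_pderivE_iterate j hf k).of_le (WithTop.coe_le_coe.mpr le_top)
    rw [Function.iterate_succ_apply', Function.iterate_succ_apply', pderivE_comm i j hk, ih]

lemma contDiff_foldr_pderivE (β : Fin d → ℕ) (hf : ContDiff ℝ (⊤ : ℕ∞) f) (L : List (Fin d)) :
    ContDiff ℝ (⊤ : ℕ∞) (L.foldr (fun i g => (pderivE i)^[β i] g) f) := by
  induction L with
  | nil => exact hf
  | cons a L ih => exact contDiff_pderivE_iterate a ih _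

lemma foldr_pderivE_update_of_notMem (β : Fin d → ℕ) (f : EuclideanSpace ℝ (Fin d) → ℝ)
    {i : Fin d} (c : ℕ) {L : List (Fin d)} (hi : i ∉ L) :
    L.foldr (fun k g => (pderivE k)^[Function.update β i c k] g) f =
      L.foldr (fun k g => (pderivE k)^[β k] g) f := by
  refine List.foldr_ext _ _ _ fun k hk g => ?_
  rw [Function.update_of_ne (ne_of_mem_of_not_mem hk hi)]

lemma pderivE_foldr (β : Fin d → ℕ) (hf : ContDiff ℝ (⊤ : ℕ∞) f) {i : Fin d}
    {L : List (Fin d)} (hL : L.Nodup) (hi : i ∈ L) :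
    pderivE i (L.foldr (fun k g => (pderivE k)^[β k] g) f) =
      L.foldr (fun k g => (pderivE k)^[Function.update β i (β i + 1) k] g) f := by
  induction L with
  | nil => simp at hi
  | cons a L ih =>
    rw [List.nodup_cons] at hL
    rw [List.foldr_cons, List.foldr_cons]
    by_cases hia : i = a
    · subst hia
      rw [foldr_pderivE_update_of_notMem _ _ _ hL.1, Function.update_self,
        Function.iterate_succ_apply']
    · rw [Function.update_of_ne (Ne.symm hia),
        pderivE_iterate_comm _ _ (contDiff_foldr_pderivE β hf L),
        ih hL.2 (List.mem_of_ne_of_mem hia hi)]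

lemma pderivE_mderiv (β : Fin d → ℕ) (hf : ContDiff ℝ (⊤ : ℕ∞) f) (i : Fin d) :
    pderivE i (mderiv β f) = mderiv (Function.update β i (β i + 1)) f :=
  pderivE_foldr β hf (List.nodup_finRange d) (List.mem_finRange i)

lemma mderiv_zero (f : EuclideanSpace ℝ (Fin d) → ℝ) : mderiv 0 f = f := by
  simp only [mderiv, Pi.zero_apply, Function.iterate_zero_apply, List.foldr_fixed]

lemma exists_iteratedFDeriv_single_eq_mderiv (hf : ContDiff ℝ (⊤ : ℕ∞) f) {m : ℕ}
    (J : Fin m → Fin d) :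
    ∃ β : Fin d → ℕ, ∑ i, β i = m ∧
      ∀ x, iteratedFDeriv ℝ m f x (fun k => EuclideanSpace.single (J k) 1) = mderiv β f x := by
  induction m with
  | zero => exact ⟨0, by simp, fun x => by rw [mderiv_zero]; simp⟩
  | succ m ih =>
    obtain ⟨β, hβ, hβf⟩ := ih (fun k => J k.succ)
    refine ⟨Function.update β (J 0) (β (J 0) + 1), ?_, fun x => ?_⟩
    · rw [Finset.sum_update_of_mem (Finset.mem_univ _), Finset.sdiff_singleton_eq_erase,
        add_right_comm, Finset.add_sum_erase _ _ (Finset.mem_univ (J 0)), hβ]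
    · have hd : DifferentiableAt ℝ (iteratedFDeriv ℝ m f) x :=
        hf.contDiffAt.differentiableAt_iteratedFDeriv (by exact_mod_cast WithTop.coe_lt_top m)
      rw [← pderivE_mderiv β hf, ← funext hβf, iteratedFDeriv_succ_apply_left, pderivE,
        fderiv_continuousMultilinear_apply_const_apply hd]
      rfl

end CoordinateDerivatives

section OperatorNorm

variable {ι E F : Type*} [Fintype ι] [NormedAddCommGroup E] [InnerProductSpace ℝ E]
  [NormedAddCommGroup F] [NormedSpace ℝ F]

lemma opNorm_sq_le_sum_norm_sq_basis (b : OrthonormalBasis ι ℝ E) {m : ℕ} (A : E [×m]→L[ℝ] F) :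
    ‖A‖ ^ 2 ≤ ∑ J : Fin m → ι, ‖A fun k => b (J k)‖ ^ 2 := by
  classical
  refine Real.le_sqrt (norm_nonneg _) (by positivity) |>.mp ?_
  refine A.opNorm_le_bound (Real.sqrt_nonneg _) fun v => ?_
  have hexpand : A v = ∑ J : Fin m → ι, (∏ k, b.repr (v k) (J k)) • A fun k => b (J k) := by
    conv_lhs => rw [show v = fun k => ∑ i, b.repr (v k) i • b i from
      funext fun k => (b.sum_repr (v k)).symm]
    rw [A.map_sum]
    exact Finset.sum_congr rfl fun J _ => A.map_smul_univ _ _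
  have hcoord : ∑ J : Fin m → ι, (∏ k, ‖b.repr (v k) (J k)‖) ^ 2 = (∏ k, ‖v k‖) ^ 2 := by
    simp only [← Finset.prod_pow, ← b.repr.norm_map, EuclideanSpace.norm_sq_eq]
    rw [Finset.prod_univ_sum, Fintype.piFinset_univ]
  calc ‖A v‖ ≤ ∑ J : Fin m → ι, ‖A fun k => b (J k)‖ * ∏ k, ‖b.repr (v k) (J k)‖ := by
        rw [hexpand]
        refine (norm_sum_le _ _).trans_eq (Finset.sum_congr rfl fun J _ => ?_)
        rw [norm_smul, norm_prod, mul_comm]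
    _ ≤ √(∑ J : Fin m → ι, ‖A fun k => b (J k)‖ ^ 2) *
        √(∑ J : Fin m → ι, (∏ k, ‖b.repr (v k) (J k)‖) ^ 2) :=
      Real.sum_mul_le_sqrt_mul_sqrt _ _ _
    _ = √(∑ J : Fin m → ι, ‖A fun k => b (J k)‖ ^ 2) * ∏ k, ‖v k‖ := by
      rw [hcoord, Real.sqrt_sq (by positivity)]

end OperatorNorm

section WeightedDerivatives

lemma eLpNorm_two_sq_le_sum {α ι E F : Type*} [MeasurableSpace α] {μ : Measure α} [Fintype ι]
    [NormedAddCommGroup E] [NormedAddCommGroup F] {g : α → E} {h : ι → α → F}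
    (hh : ∀ i, AEStronglyMeasurable (h i) μ) (hgh : ∀ x, ‖g x‖ ^ 2 ≤ ∑ i, ‖h i x‖ ^ 2) :
    eLpNorm g 2 μ ^ 2 ≤ ∑ i, eLpNorm (h i) 2 μ ^ 2 := by
  simp only [eLpNorm_two_sq]
  rw [← lintegral_finsetSum' _ fun i _ => (hh i).enorm.pow_const 2]
  refine lintegral_mono fun x => ?_
  simp only [← ofReal_norm, ← ENNReal.ofReal_pow (norm_nonneg _)]
  rw [← ENNReal.ofReal_sum_of_nonneg fun _ _ => by positivity]
  exact ENNReal.ofReal_le_ofReal (hgh x)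

lemma eLpNorm_mul_norm_iteratedFDeriv_le {d : ℕ} {f : EuclideanSpace ℝ (Fin d) → ℝ}
    (hf : ContDiff ℝ (⊤ : ℕ∞) f) {w : EuclideanSpace ℝ (Fin d) → ℝ} (hw : Continuous w)
    {μ : Measure (EuclideanSpace ℝ (Fin d))} {m : ℕ} {D : ℝ}
    (h : ∀ β : Fin d → ℕ, ∑ i, β i = m →
      eLpNorm (fun x => w x * mderiv β f x) 2 μ ≤ ENNReal.ofReal D) :
    eLpNorm (fun x => w x * ‖iteratedFDeriv ℝ m f x‖) 2 μ ≤ ENNReal.ofReal (√d ^ m * D) := by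
  choose β hβ hβf using fun J : Fin m → Fin d => exists_iteratedFDeriv_single_eq_mderiv hf J
  have hcont : ∀ J, Continuous (mderiv (β J) f) := fun J => by
    have hm : Continuous (iteratedFDeriv ℝ m f) :=
      hf.continuous_iteratedFDeriv (by exact_mod_cast le_top)
    rw [← funext (hβf J)]
    fun_prop
  have hpointwise : ∀ x, ‖w x * ‖iteratedFDeriv ℝ m f x‖‖ ^ 2 ≤
      ∑ J, ‖w x * mderiv (β J) f x‖ ^ 2 := fun x => by
    simp only [norm_mul, norm_norm, mul_pow, ← Finset.mul_sum, ← hβf]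
    gcongr
    simpa only [EuclideanSpace.basisFun_apply] using
      opNorm_sq_le_sum_norm_sq_basis (EuclideanSpace.basisFun (Fin d) ℝ) (iteratedFDeriv ℝ m f x)
  refine (ENNReal.pow_le_pow_left_iff two_ne_zero).mp ?_
  calc eLpNorm (fun x => w x * ‖iteratedFDeriv ℝ m f x‖) 2 μ ^ 2
      ≤ ∑ J, eLpNorm (fun x => w x * mderiv (β J) f x) 2 μ ^ 2 :=
        eLpNorm_two_sq_le_sum (fun J => (hw.mul (hcont J)).aestronglyMeasurable) hpointwise
    _ ≤ ∑ _J : Fin m → Fin d, ENNReal.ofReal D ^ 2 := by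
        gcongr with J
        exact h _ (hβ J)
    _ = ENNReal.ofReal (√d ^ m * D) ^ 2 := by
        rw [Finset.sum_const, Finset.card_univ, Fintype.card_fun, Fintype.card_fin,
          Fintype.card_fin, ENNReal.ofReal_mul (by positivity), mul_pow,
          ← ENNReal.ofReal_pow (p := √d ^ m) (by positivity), pow_right_comm,
          Real.sq_sqrt (by positivity), ← Nat.cast_pow, ENNReal.ofReal_natCast, nsmul_eq_mul]

lemma eLpNorm_weight_mul_norm_iteratedFDeriv_le {d : ℕ} {f : EuclideanSpace ℝ (Fin d) → ℝ}
    (hf : ContDiff ℝ (⊤ : ℕ∞) f) {D₁ D₂ ν τ : ℝ} (hder : ∀ (p : ℕ) (β : Fin d → ℕ),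
      eLpNorm (fun x => (1 + ‖x‖ ^ 2) ^ ((p : ℝ) / 2) * mderiv β f x) 2 volume ≤
        ENNReal.ofReal (D₁ * D₂ ^ (p + ∑ i, β i) *
          (p.factorial : ℝ) ^ ν * (((∑ i, β i).factorial : ℝ)) ^ τ)) (p m : ℕ) :
    eLpNorm (fun x => (1 + ‖x‖ ^ 2) ^ ((p : ℝ) / 2) * ‖iteratedFDeriv ℝ m f x‖) 2 volume ≤
      ENNReal.ofReal (D₁ * √d ^ m * D₂ ^ (p + m) *
        (p.factorial : ℝ) ^ ν * (m.factorial : ℝ) ^ τ) := by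
  have hweight : Continuous fun x : EuclideanSpace ℝ (Fin d) => (1 + ‖x‖ ^ 2) ^ ((p : ℝ) / 2) :=
    (by fun_prop : Continuous _).rpow_const fun x => .inl (by positivity)
  refine (eLpNorm_mul_norm_iteratedFDeriv_le hf hweight
    fun β hβ => by simpa only [hβ] using hder p β).trans_eq ?_
  ring_nf

end WeightedDerivatives

section FactorialBounds

open Real

lemma factorial_rpow_le_rpow_mul_exp {δ ν : ℝ} (hν : 0 ≤ ν) {m p : ℕ} (hm : 1 ≤ m) (hpm : p ≤ m)
    (hp : (p : ℝ) ≤ δ * m + 1) :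
    (p.factorial : ℝ) ^ ν ≤ (m : ℝ) ^ (δ * ν * m) * exp (ν * m) := by
  have hm1 : (1 : ℝ) ≤ m := by exact_mod_cast hm
  have hm0 : (0 : ℝ) < m := by linarith
  have hfactorial : (p.factorial : ℝ) ≤ (m : ℝ) ^ (δ * m) * exp m := by
    calc (p.factorial : ℝ) ≤ (p : ℝ) ^ p := by exact_mod_cast Nat.factorial_le_pow p
      _ ≤ (m : ℝ) ^ p := by gcongr
      _ = (m : ℝ) ^ (p : ℝ) := (rpow_natCast _ _).symm
      _ ≤ (m : ℝ) ^ (δ * m + 1) := rpow_le_rpow_of_exponent_le hm1 hp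
      _ = (m : ℝ) ^ (δ * m) * m := by rw [rpow_add hm0, rpow_one]
      _ ≤ (m : ℝ) ^ (δ * m) * exp m := by
        gcongr
        linarith [add_one_le_exp (m : ℝ)]
  calc (p.factorial : ℝ) ^ ν ≤ ((m : ℝ) ^ (δ * m) * exp m) ^ ν := by gcongr
    _ = (m : ℝ) ^ (δ * ν * m) * exp (ν * m) := by
      rw [mul_rpow (by positivity) (by positivity), ← rpow_mul hm0.le, ← exp_mul,
        mul_right_comm, mul_comm (m : ℝ) ν]

lemma factorial_rpow_le_rpow {τ : ℝ} (hτ : 0 ≤ τ) (m : ℕ) :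
    (m.factorial : ℝ) ^ τ ≤ (m : ℝ) ^ (τ * m) := by
  calc (m.factorial : ℝ) ^ τ ≤ ((m : ℝ) ^ m) ^ τ := by
        gcongr
        exact_mod_cast Nat.factorial_le_pow m
    _ = (m : ℝ) ^ (τ * m) := by
      rw [← rpow_natCast, ← rpow_mul (Nat.cast_nonneg m), mul_comm]

lemma inv_factorial_le_exp_mul_rpow (n : ℕ) :
    (n.factorial : ℝ)⁻¹ ≤ exp (2 * (n + 1 : ℕ)) * ((n + 1 : ℕ) : ℝ) ^ (-((n + 1 : ℕ) : ℝ)) := by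
  set m := n + 1
  have hm0 : (0 : ℝ) < m := by positivity
  have hpow := pow_div_factorial_le_exp (m : ℝ) hm0.le m
  rw [div_le_iff₀ (by positivity)] at hpow
  rw [rpow_neg hm0.le, rpow_natCast, ← div_eq_mul_inv, inv_eq_one_div,
    div_le_div_iff₀ (by positivity) (by positivity), one_mul]
  calc (m : ℝ) ^ m ≤ exp m * m.factorial := hpow
    _ = exp m * m * n.factorial := by rw [Nat.factorial_succ, Nat.cast_mul, ← mul_assoc]
    _ ≤ exp m * exp m * n.factorial := by
      gcongr
      linarith [add_one_le_exp (m : ℝ)]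
    _ = exp (2 * m) * n.factorial := by rw [← exp_add, two_mul]

lemma pow_mul_factorial_rpow_mul_inv_factorial_le {δ ν τ D : ℝ} (hν : 0 ≤ ν) (hτ : 0 ≤ τ)
    (hD : 1 ≤ D) {n p : ℕ} (hpn : p ≤ n + 1) (hp : (p : ℝ) ≤ δ * (n + 1 : ℕ) + 1) :
    D ^ (p + (n + 1)) * (p.factorial : ℝ) ^ ν * ((n + 1).factorial : ℝ) ^ τ *
        (n.factorial : ℝ)⁻¹ ≤
      (exp (2 + ν) * D ^ 2) ^ (n + 1) *
        ((n + 1 : ℕ) : ℝ) ^ (-((1 - (δ * ν + τ)) * (n + 1 : ℕ))) := by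
  have hp' := factorial_rpow_le_rpow_mul_exp hν n.succ_pos hpn hp
  have hn := factorial_rpow_le_rpow hτ (n + 1)
  have hn' := inv_factorial_le_exp_mul_rpow n
  have hDp : D ^ (p + (n + 1)) ≤ D ^ (2 * (n + 1)) := pow_le_pow_right₀ hD (by lia)
  rw [Nat.succ_eq_add_one] at hp'
  set m := n + 1
  have hm0 : (0 : ℝ) < m := by positivity
  calc D ^ (p + m) * (p.factorial : ℝ) ^ ν * (m.factorial : ℝ) ^ τ * (n.factorial : ℝ)⁻¹
      ≤ D ^ (2 * m) * ((m : ℝ) ^ (δ * ν * m) * exp (ν * m)) * (m : ℝ) ^ (τ * m) *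
        (exp (2 * m) * (m : ℝ) ^ (-(m : ℝ))) := by gcongr
    _ = (exp (2 * m) * exp (ν * m) * D ^ (2 * m)) *
        ((m : ℝ) ^ (δ * ν * m) * (m : ℝ) ^ (τ * m) * (m : ℝ) ^ (-(m : ℝ))) := by ring
    _ = (exp (2 + ν) * D ^ 2) ^ m * (m : ℝ) ^ (-((1 - (δ * ν + τ)) * m)) := by
      rw [← exp_add, ← rpow_add hm0, ← rpow_add hm0, mul_pow, ← exp_nat_mul, ← pow_mul]
      ring_nf

end FactorialBounds

section ChoiceOfOrder

open Real

lemma mul_pow_mul_rpow_sq_le {a B q ε : ℝ} (ha : 0 < a) (hB : 0 ≤ B) (hε : 0 < ε) {m : ℕ}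
    (hm : 1 ≤ m) (hBm : B * exp 1 ≤ (m : ℝ) ^ (2 * q)) (hεm : log a + log (1 / ε) ≤ m) :
    a * (B ^ m * ((m : ℝ) ^ (-(q * m))) ^ 2) ≤ ε := by
  have hm0 : (0 : ℝ) < m := by positivity
  have hrpow : ((m : ℝ) ^ (-(q * m))) ^ 2 = (((m : ℝ) ^ (2 * q))⁻¹) ^ m := by
    rw [← rpow_neg hm0.le, ← rpow_natCast, ← rpow_natCast, ← rpow_mul hm0.le, ← rpow_mul hm0.le]
    congr 1
    push_cast
    ring
  have hbase : B * ((m : ℝ) ^ (2 * q))⁻¹ ≤ exp (-1) := by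
    rw [exp_neg, ← div_eq_mul_inv, div_le_iff₀ (by positivity), ← div_eq_inv_mul,
      le_div_iff₀ (exp_pos _)]
    exact hBm
  calc a * (B ^ m * ((m : ℝ) ^ (-(q * m))) ^ 2)
      = a * (B * ((m : ℝ) ^ (2 * q))⁻¹) ^ m := by rw [hrpow, mul_pow]
    _ ≤ a * exp (-1) ^ m := by gcongr
    _ = exp (log a - m) := by rw [← exp_nat_mul, mul_neg_one, sub_eq_add_neg, exp_add, exp_log ha]
    _ ≤ exp (-log (1 / ε)) := exp_le_exp.mpr (by linarith)
    _ = ε := by rw [one_div, log_inv, neg_neg, exp_log hε]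

lemma mul_pow_le_exp_mul {a b c X : ℝ} (ha : 1 ≤ a) (hb : 1 ≤ b) {m : ℕ} (hX : 1 ≤ X)
    (hm : m ≤ c * X) : a * b ^ m ≤ exp ((log a + c * log b) * X) := by
  have hla := log_nonneg ha
  have hlb := log_nonneg hb
  calc a * b ^ m = exp (log a + m * log b) := by
        rw [exp_add, exp_nat_mul, exp_log (by positivity), exp_log (by positivity)]
    _ ≤ exp (log a * X + c * X * log b) := by
        gcongr
        exact le_mul_of_one_le_right hla hX
    _ = exp ((log a + c * log b) * X) := by ring_nf

lemma exists_mul_pow_le_exp_and_mul_pow_mul_rpow_sq_le {a b B q : ℝ} (ha : 1 ≤ a) (hb : 1 ≤ b)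
    (hB : 0 ≤ B) (hq : 0 < q) :
    ∃ K : ℝ, 1 ≤ K ∧ ∀ D ε : ℝ, 1 ≤ D → 0 < ε → ε ≤ 1 → ∃ n : ℕ,
      a * b ^ (n + 1) ≤ exp (K * (1 + log (1 / ε) + D ^ (2 / q))) ∧
      a * ((B * D ^ 4) ^ (n + 1) * (((n + 1 : ℕ) : ℝ) ^ (-(q * (n + 1 : ℕ)))) ^ 2) ≤ ε := by
  have hla := log_nonneg ha
  have hlb := log_nonneg hb
  set c : ℝ := (B * exp 1) ^ (1 / (2 * q)) with hc
  have hc0 : 0 ≤ c := by positivity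
  refine ⟨1 + (log a + (1 + c + log a) * log b), le_add_of_nonneg_right (by positivity),
    fun D ε hD hε0 hε1 => ?_⟩
  set l := log (1 / ε)
  have hl0 : 0 ≤ l := log_nonneg (one_le_one_div hε0 hε1)
  set V : ℝ := D ^ (2 / q) with hV
  have hV0 : 0 ≤ V := by positivity
  have hZ0 : 0 ≤ c * V + l + log a := by positivity
  set n := ⌊c * V + l + log a⌋₊
  have hn_ge : c * V + l + log a ≤ (n + 1 : ℕ) := by
    exact_mod_cast (Nat.lt_floor_add_one _).le
  have hn_le : ((n + 1 : ℕ) : ℝ) ≤ (1 + c + log a) * (1 + l + V) := by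
    push_cast
    nlinarith [Nat.floor_le hZ0, mul_nonneg hc0 hl0, mul_nonneg hla hl0, mul_nonneg hla hV0]
  refine ⟨n, (mul_pow_le_exp_mul ha hb (by linarith) hn_le).trans ?_,
    mul_pow_mul_rpow_sq_le (by positivity) (by positivity) hε0 n.succ_pos ?_ ?_⟩
  · refine exp_le_exp.mpr (mul_le_mul_of_nonneg_right ?_ (by positivity))
    exact le_add_of_nonneg_left zero_le_one
  · calc B * D ^ 4 * exp 1 = (c * V) ^ (2 * q) := by
          rw [mul_rpow hc0 hV0, hc, hV, ← rpow_mul (by positivity), ← rpow_mul (by positivity),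
            one_div_mul_cancel (by positivity), rpow_one,
            show 2 / q * (2 * q) = (4 : ℕ) by field_simp; norm_num, rpow_natCast]
          ring
      _ ≤ ((n + 1 : ℕ) : ℝ) ^ (2 * q) := by
          gcongr
          linarith
  · linarith [mul_nonneg hc0 hV0]

/-- The Taylor remainder of order `m = n + 1`, summed over all balls, carries the factor
`(p!) ^ ν * (m!) ^ τ / n! ≲ m ^ (-(1 - (δ * ν + τ)) * m)` with `p ≈ δ * m`. It beats every fixed
exponential in `m` once `m` is a large multiple of `D₂ ^ (2 / (1 - (δ * ν + τ))) + log (1 / ε)`. -/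
lemma exists_order_mul_pow_le_exp_and_remainder_le {a b Q C δ ν τ : ℝ} (ha : 1 ≤ a) (hb : 1 ≤ b)
    (hQ : 0 ≤ Q) (hδ0 : 0 ≤ δ) (hδ1 : δ ≤ 1) (hν : 0 ≤ ν) (hτ : 0 ≤ τ) (hs : δ * ν + τ < 1) :
    ∃ K : ℝ, 1 ≤ K ∧ ∀ D₁ D₂ ε : ℝ, 1 ≤ D₂ → 0 < ε → ε ≤ 1 →
      ∃ n p : ℕ, δ * (n + 1 : ℕ) ≤ p ∧ p ≤ n + 1 ∧
        a * b ^ (n + 1) ≤ exp (K * (1 + log (1 / ε) + D₂ ^ (2 / (1 - (δ * ν + τ))))) ∧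
        a * b ^ (n + 1) * (Q ^ (n + 1) / n.factorial ^ 2 *
          (D₁ * C ^ (n + 1) * D₂ ^ (p + (n + 1)) * (p.factorial : ℝ) ^ ν *
            ((n + 1).factorial : ℝ) ^ τ) ^ 2) ≤ ε * D₁ ^ 2 := by
  obtain ⟨K, hK1, hK⟩ := exists_mul_pow_le_exp_and_mul_pow_mul_rpow_sq_le
    (B := b * Q * C ^ 2 * exp (2 + ν) ^ 2) ha hb (by positivity) (sub_pos.mpr hs)
  refine ⟨K, hK1, fun D₁ D₂ ε hD₂ hε0 hε1 => ?_⟩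
  obtain ⟨n, hn_exp, hn_le⟩ := hK D₂ ε hD₂ hε0 hε1
  have hp_le : ⌈δ * (n + 1 : ℕ)⌉₊ ≤ n + 1 :=
    Nat.ceil_le.mpr (mul_le_of_le_one_left (by positivity) hδ1)
  refine ⟨n, ⌈δ * (n + 1 : ℕ)⌉₊, Nat.le_ceil _, hp_le, hn_exp, ?_⟩
  have hfactorial := pow_mul_factorial_rpow_mul_inv_factorial_le hν hτ hD₂ hp_le
    (Nat.ceil_lt_add_one (by positivity)).le
  generalize ⌈δ * (n + 1 : ℕ)⌉₊ = p at hfactorial ⊢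
  set m := n + 1
  calc a * b ^ m * (Q ^ m / n.factorial ^ 2 *
        (D₁ * C ^ m * D₂ ^ (p + m) * (p.factorial : ℝ) ^ ν * (m.factorial : ℝ) ^ τ) ^ 2)
      = D₁ ^ 2 * a * (b * Q * C ^ 2) ^ m *
        (D₂ ^ (p + m) * (p.factorial : ℝ) ^ ν * (m.factorial : ℝ) ^ τ *
          (n.factorial : ℝ)⁻¹) ^ 2 := by
        field_simp
        ring
    _ ≤ D₁ ^ 2 * a * (b * Q * C ^ 2) ^ m *
        ((exp (2 + ν) * D₂ ^ 2) ^ m * (m : ℝ) ^ (-((1 - (δ * ν + τ)) * m))) ^ 2 := by gcongr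
    _ = a * ((b * Q * C ^ 2 * exp (2 + ν) ^ 2 * D₂ ^ 4) ^ m *
        ((m : ℝ) ^ (-((1 - (δ * ν + τ)) * m))) ^ 2) * D₁ ^ 2 := by ring
    _ ≤ ε * D₁ ^ 2 := by gcongr

end ChoiceOfOrder

section GlobalEstimate

variable {E : Type*} [NormedAddCommGroup E] [NormedSpace ℝ E] [FiniteDimensional ℝ E]
  [MeasurableSpace E] [BorelSpace E] (μ : Measure E) [μ.IsAddHaarMeasure]
  {γ δ R η r₀ : ℝ}

lemma setLIntegral_ball_le_of_thick {f : E → ℝ} {n p : ℕ} (hf : ContDiff ℝ (n + 1 : ℕ) f)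
    (hp : δ * (n + 1 : ℕ) ≤ p) (hpn : p ≤ n + 1) (hη0 : 0 ≤ η) (hη1 : η < 1) {x : E} {r : ℝ}
    (hrR : r ≤ R * (1 + ‖x‖ ^ 2) ^ (δ / 2)) (hrη : r₀ ≤ ‖x‖ → r ≤ η * ‖x‖)
    {ω : Set E} (hω : MeasurableSet ω) (hγ0 : 0 < γ) (hγ1 : γ ≤ 1)
    (hωr : ENNReal.ofReal γ * μ (Metric.ball x r) ≤ μ (Metric.ball x r ∩ ω))
    {κ : ℝ} (hκ : κ = γ ^ 2 / (8 * (Module.finrank ℝ E + 1))) :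
    ∫⁻ y in Metric.ball x r, ‖f y‖ₑ ^ 2 ∂μ ≤
      ENNReal.ofReal (2 ^ Module.finrank ℝ E / κ * (4 / κ * (144 / κ ^ 2) ^ (n + 1))) *
        (∫⁻ y in Metric.ball x r ∩ ω, ‖f y‖ₑ ^ 2 ∂μ +
          ENNReal.ofReal
            ((4 * R ^ 2 * ((1 + r₀ ^ 2) / (1 - η) ^ 2)) ^ (n + 1) / n.factorial ^ 2) *
            ∫⁻ y in Metric.ball x r,
              ‖(1 + ‖y‖ ^ 2) ^ ((p : ℝ) / 2) * ‖iteratedFDeriv ℝ (n + 1) f y‖‖ₑ ^ 2 ∂μ) := by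
  refine (setLIntegral_enorm_sq_le_of_convex μ hf (convex_ball x r) measurableSet_ball
    measure_ball_lt_top.ne (fun y hy z hz => ?_) (measurableSet_ball.inter hω)
    Set.inter_subset_left hγ0 hγ1 hωr hκ (r := 2 * r)).trans ?_
  · rw [two_mul]
    exact (dist_triangle_right y z x).trans (add_le_add hy.le hz.le)
  gcongr _ * (_ + ?_)
  rw [← lintegral_const_mul' _ _ ENNReal.ofReal_ne_top,
    ← lintegral_const_mul' _ _ ENNReal.ofReal_ne_top]
  refine setLIntegral_mono' measurableSet_ball fun y hy => ?_
  have hweight := two_mul_pow_le_mul_weight_of_mem_ball hη0 hη1 hrR hrη hp hpn hy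
  have hsq : ((1 + ‖y‖ ^ 2) ^ ((p : ℝ) / 2)) ^ 2 = (1 + ‖y‖ ^ 2) ^ p := by
    rw [← Real.rpow_natCast, ← Real.rpow_mul (by positivity), Nat.cast_ofNat,
      div_mul_cancel₀ _ two_ne_zero, Real.rpow_natCast]
  have henorm : ‖(1 + ‖y‖ ^ 2) ^ ((p : ℝ) / 2) * ‖iteratedFDeriv ℝ (n + 1) f y‖‖ₑ ^ 2 =
      ENNReal.ofReal ((1 + ‖y‖ ^ 2) ^ p) * ‖iteratedFDeriv ℝ (n + 1) f y‖ₑ ^ 2 := by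
    rw [enorm_mul, enorm_norm, mul_pow, Real.enorm_of_nonneg (by positivity),
      ← ENNReal.ofReal_pow (by positivity), hsq]
  rw [henorm, ← mul_assoc, ← ENNReal.ofReal_mul (by positivity), div_mul_eq_mul_div]
  gcongr

lemma exists_eLpNorm_sq_le_of_thick (hγ0 : 0 < γ) (hγ1 : γ ≤ 1) (hδ0 : 0 ≤ δ) (hR : 0 ≤ R)
    (hη0 : 0 ≤ η) (hη1 : η < 1) :
    ∃ a b Q : ℝ, 1 ≤ a ∧ 1 ≤ b ∧ 0 ≤ Q ∧ ∀ (f : E → ℝ) (n p : ℕ),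
      ContDiff ℝ (n + 1 : ℕ) f → δ * (n + 1 : ℕ) ≤ p → p ≤ n + 1 →
      ∀ ρ : E → ℝ, (∀ x, 0 < ρ x) → (∀ x, ρ x ≤ R * (1 + ‖x‖ ^ 2) ^ (δ / 2)) →
        (∀ x, r₀ ≤ ‖x‖ → ρ x ≤ η * ‖x‖) →
      ∀ ω : Set E, MeasurableSet ω →
        (∀ x, ENNReal.ofReal γ * μ (Metric.ball x (ρ x)) ≤ μ (Metric.ball x (ρ x) ∩ ω)) →
      eLpNorm f 2 μ ^ 2 ≤ ENNReal.ofReal (a * b ^ (n + 1)) *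
        (eLpNorm f 2 (μ.restrict ω) ^ 2 + ENNReal.ofReal (Q ^ (n + 1) / n.factorial ^ 2) *
          eLpNorm (fun x => (1 + ‖x‖ ^ 2) ^ ((p : ℝ) / 2) * ‖iteratedFDeriv ℝ (n + 1) f x‖)
            2 μ ^ 2) := by
  obtain ⟨N, hN⟩ := exists_measure_univ_le_nat_mul_of_forall_ball_le E
  obtain ⟨κ, hκ⟩ : ∃ κ : ℝ, κ = γ ^ 2 / (8 * (Module.finrank ℝ E + 1)) := ⟨_, rfl⟩
  have hκ0 : 0 < κ := hκ ▸ by positivity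
  refine ⟨1 + N * (2 ^ Module.finrank ℝ E / κ * (4 / κ)), 1 + 144 / κ ^ 2,
    4 * R ^ 2 * ((1 + r₀ ^ 2) / (1 - η) ^ 2), le_add_of_nonneg_right (by positivity),
    le_add_of_nonneg_right (by positivity), by positivity,
    fun f n p hf hp hpn ρ hρ0 hρ1 hρ2 ω hω hωρ => ?_⟩
  set A := 2 ^ Module.finrank ℝ E / κ * (4 / κ * (144 / κ ^ 2) ^ (n + 1)) with hA
  set c := ENNReal.ofReal ((4 * R ^ 2 * ((1 + r₀ ^ 2) / (1 - η) ^ 2)) ^ (n + 1) / n.factorial ^ 2)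
  set g : E → ℝ := fun x => (1 + ‖x‖ ^ 2) ^ ((p : ℝ) / 2) * ‖iteratedFDeriv ℝ (n + 1) f x‖
  have hglobal := hN (μ.withDensity fun x => ‖f x‖ₑ ^ 2)
    (ENNReal.ofReal A • ((μ.restrict ω).withDensity (fun x => ‖f x‖ₑ ^ 2) +
      c • μ.withDensity fun x => ‖g x‖ₑ ^ 2)) ρ hρ0 (fun x => by
        simp only [Measure.smul_apply, Measure.add_apply, smul_eq_mul,
          withDensity_apply _ measurableSet_ball, Measure.restrict_restrict measurableSet_ball]
        exact setLIntegral_ball_le_of_thick μ hf hp hpn hη0 hη1 (hρ1 x) (hρ2 x) hω hγ0 hγ1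
          (hωρ x) hκ)
    fun _ => bddAbove_image_of_le_rpow hR hδ0 hρ1
  simp only [Measure.smul_apply, Measure.add_apply, smul_eq_mul, withDensity_apply _ .univ,
    Measure.restrict_univ, ← eLpNorm_two_sq] at hglobal
  refine hglobal.trans ?_
  rw [← mul_assoc, ← ENNReal.ofReal_natCast, ← ENNReal.ofReal_mul (by positivity)]
  gcongr ENNReal.ofReal ?_ * _
  calc N * A = N * (2 ^ Module.finrank ℝ E / κ * (4 / κ)) * (144 / κ ^ 2) ^ (n + 1) := by
        rw [hA]
        ring
    _ ≤ (1 + N * (2 ^ Module.finrank ℝ E / κ * (4 / κ))) * (1 + 144 / κ ^ 2) ^ (n + 1) := by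
        gcongr <;> exact le_add_of_nonneg_left zero_le_one

lemma sq_le_ofReal_sq {a : ENNReal} {x : ℝ} (h : a ≤ ENNReal.ofReal x) :
    a ^ 2 ≤ ENNReal.ofReal (x ^ 2) := by
  rw [← sq_abs, ENNReal.ofReal_pow (abs_nonneg x)]
  exact pow_le_pow_left' (h.trans (ENNReal.ofReal_le_ofReal (le_abs_self x))) 2

end GlobalEstimate

theorem uncertainty_principle_general {E : Type*} [NormedAddCommGroup E] [NormedSpace ℝ E]
    [FiniteDimensional ℝ E] [MeasurableSpace E] [BorelSpace E] (μ : Measure E)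
    [μ.IsAddHaarMeasure] (C ν τ δ R η r₀ γ : ℝ) (hν : 0 ≤ ν) (hτ : 0 ≤ τ)
    (hδ0 : 0 ≤ δ) (hδ1 : δ ≤ 1) (hs : δ * ν + τ < 1)
    (hR : 0 ≤ R) (hη0 : 0 ≤ η) (hη1 : η < 1) (hγ0 : 0 < γ) (hγ1 : γ ≤ 1) :
    ∃ K : ℝ, 1 ≤ K ∧ ∀ (f : E → ℝ) (D₁ D₂ : ℝ), 1 ≤ D₂ → ContDiff ℝ (⊤ : ℕ∞) f →
      (∀ p m : ℕ, eLpNorm (fun x => (1 + ‖x‖ ^ 2) ^ ((p : ℝ) / 2) * ‖iteratedFDeriv ℝ m f x‖) 2 μ ≤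
        ENNReal.ofReal (D₁ * C ^ m * D₂ ^ (p + m) *
          (p.factorial : ℝ) ^ ν * (m.factorial : ℝ) ^ τ)) →
      ∀ ρ : E → ℝ, (∀ x, 0 < ρ x) → (∀ x, ρ x ≤ R * (1 + ‖x‖ ^ 2) ^ (δ / 2)) →
        (∀ x, r₀ ≤ ‖x‖ → ρ x ≤ η * ‖x‖) →
      ∀ ω : Set E, MeasurableSet ω →
        (∀ x, ENNReal.ofReal γ * μ (Metric.ball x (ρ x)) ≤ μ (Metric.ball x (ρ x) ∩ ω)) →
      ∀ ε : ℝ, 0 < ε → ε ≤ 1 →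
        eLpNorm f 2 μ ^ 2 ≤
          ENNReal.ofReal
              (Real.exp (K * (1 + Real.log (1 / ε) + D₂ ^ (2 / (1 - (δ * ν + τ)))))) *
            eLpNorm f 2 (μ.restrict ω) ^ 2 + ENNReal.ofReal (ε * D₁ ^ 2) := by
  obtain ⟨a, b, Q, ha, hb, hQ, hglobal⟩ :=
    exists_eLpNorm_sq_le_of_thick μ (r₀ := r₀) hγ0 hγ1 hδ0 hR hη0 hη1
  obtain ⟨K, hK1, hK⟩ :=
    exists_order_mul_pow_le_exp_and_remainder_le (C := C) ha hb hQ hδ0 hδ1 hν hτ hs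
  refine ⟨K, hK1, fun f D₁ D₂ hD₂ hf hder ρ hρ0 hρ1 hρ2 ω hω hωρ ε hε0 hε1 => ?_⟩
  obtain ⟨n, p, hp, hpn, hexp, hrem⟩ := hK D₁ D₂ ε hD₂ hε0 hε1
  have hf' : ContDiff ℝ (n + 1 : ℕ) f := hf.of_le (WithTop.coe_le_coe.mpr le_top)
  refine (hglobal f n p hf' hp hpn ρ hρ0 hρ1 hρ2 ω hω hωρ).trans ?_
  rw [mul_add]
  gcongr ?_ + ?_
  · gcongr
  · refine le_trans ?_ (ENNReal.ofReal_le_ofReal hrem)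
    rw [ENNReal.ofReal_mul (p := a * b ^ (n + 1)) (by positivity),
      ENNReal.ofReal_mul (p := Q ^ (n + 1) / n.factorial ^ 2) (by positivity)]
    gcongr
    exact sq_le_ofReal_sq (hder p (n + 1))

/-- Theorem 1.1 (uncertainty principle with error term for functions with
Gelfand–Shilov-type bounds). -/
theorem uncertainty_principle
    (d : ℕ) (hd : 1 ≤ d) (ν μ δ R η r₀ γ : ℝ)
    (hν : 0 ≤ ν) (hμ0 : 0 ≤ μ) (hμ1 : μ < 1)
    (hδ0 : 0 ≤ δ) (hδ1 : δ ≤ 1) (hs : δ * ν + μ < 1)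
    (hR : 1 ≤ R) (hη0 : 0 < η) (hη1 : η < 1) (hr₀ : 1 ≤ r₀)
    (hγ0 : 0 < γ) (hγ1 : γ < 1) :
    ∃ K : ℝ, 1 ≤ K ∧
      ∀ (f : EuclideanSpace ℝ (Fin d) → ℝ) (D₁ D₂ : ℝ),
        0 < D₁ → 1 ≤ D₂ → ContDiff ℝ (⊤ : ℕ∞) f →
        (∀ (n : ℕ) (β : Fin d → ℕ),
          eLpNorm (fun x => (1 + ‖x‖ ^ 2) ^ ((n : ℝ) / 2) * mderiv β f x) 2 volume ≤
            ENNReal.ofReal (D₁ * D₂ ^ (n + ∑ i, β i) *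
              (n.factorial : ℝ) ^ ν * (((∑ i, β i).factorial : ℝ)) ^ μ)) →
        ∀ ρ : EuclideanSpace ℝ (Fin d) → ℝ, Measurable ρ → (∀ x, 0 < ρ x) →
          (∀ x, ρ x ≤ R * (1 + ‖x‖ ^ 2) ^ (δ / 2)) →
          (∀ x : EuclideanSpace ℝ (Fin d), r₀ ≤ ‖x‖ → ρ x ≤ η * ‖x‖) →
        ∀ ω : Set (EuclideanSpace ℝ (Fin d)), MeasurableSet ω →
          (∀ x, ENNReal.ofReal γ * volume (Metric.ball x (ρ x)) ≤
            volume (Metric.ball x (ρ x) ∩ ω)) →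
        ∀ ε : ℝ, 0 < ε → ε ≤ 1 →
          (eLpNorm f 2 volume) ^ 2 ≤
            ENNReal.ofReal
                (Real.exp (K * (1 + Real.log (1 / ε) + D₂ ^ ((4 : ℝ) / (1 - (δ * ν + μ)))))) *
              (eLpNorm f 2 (volume.restrict ω)) ^ 2 +
            ENNReal.ofReal (ε * D₁ ^ 2) := by
  obtain ⟨K, hK1, hK⟩ := uncertainty_principle_general
    (volume : Measure (EuclideanSpace ℝ (Fin d))) √d ν μ δ R η r₀ γ hν hμ0 hδ0 hδ1 hs
    (by linarith) hη0.le hη1 hγ0 hγ1.le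
  refine ⟨K, hK1, fun f D₁ D₂ _ hD₂ hf hder ρ _ hρ0 hρ1 hρ2 ω hω hωρ ε hε0 hε1 => ?_⟩
  refine (hK f D₁ D₂ hD₂ hf (eLpNorm_weight_mul_norm_iteratedFDeriv_le hf hder)
    ρ hρ0 hρ1 hρ2 ω hω hωρ ε hε0 hε1).trans ?_
  have hexponent : D₂ ^ (2 / (1 - (δ * ν + μ))) ≤ D₂ ^ (4 / (1 - (δ * ν + μ))) := by
    gcongr
    linarith
  gcongr
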